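/- arXiv:2605.17136 — 7 statements merged into one kernel-verified Lean document; each statement's English description precedes it below -/
import Mathlib

section
/- Let m ≥ n ≥ 2 with (m,n) ≠ (2,2), and let μ be a probability distribution on [n]^m supported exactly on Surj_{m,n} (positive on every surjective vector, zero elsewhere) which is invariant under every permutation π of [n] acting by (x_1,…,x_m) ↦ (π(x_1),…,π(x_m)). Then there exists ε₀ > 0 (depending on m, n, μ) such that for every ε with 0 < ε < ε₀ there exists δ > 0 such that for every p the following holds: if f_1,…,f_m : [n]^p → [n] satisfy Pr_{x^(1),…,x^(p) i.i.d. ∼ μ}[(f_1(x^(1)_1,…,x^(p)_1),…,f_m(x^(1)_m,…,x^(p)_m)) ∈ Surj_{m,n}] ≥ 1 − δ, and moreover for every i ∈ [m] and c ∈ [n] we have Pr_{x uniform on [n]^p}[f_i(x) = c] < 1 − ε, then there exist k ∈ [p] and a permutation π of [n] such that for all i ∈ [m], Pr_{x uniform on [n]^p}[f_i(x) = π(x_k)] ≥ 1 − ε. -/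
/-- Probability of an event under the uniform distribution on a finite type. -/
noncomputable def unifPr {α : Type*} [Fintype α] (P : α → Prop) : ℝ :=
  (Nat.card {a : α // P a} : ℝ) / Fintype.card α

open scoped Classical in
/-- Probability of an event for `p` i.i.d. samples from the distribution `μ`
(given by its probability mass function) on a finite type. -/
noncomputable def prodPr {α : Type*} [Fintype α] (μ : α → ℝ) (p : ℕ)
    (P : (Fin p → α) → Prop) : ℝ :=
  ∑ x : Fin p → α, if P x then ∏ k, μ (x k) else 0

/-! ### Basic expectation machinery -/

open scoped Classical in
noncomputable def ind (P : Prop) : ℝ := if P then 1 else 0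

lemma ind_true {P : Prop} (h : P) : ind P = 1 := by simp [ind, h]
lemma ind_false {P : Prop} (h : ¬ P) : ind P = 0 := by simp [ind, h]
lemma ind_nonneg (P : Prop) : 0 ≤ ind P := by unfold ind; split_ifs <;> norm_num
lemma ind_le_one (P : Prop) : ind P ≤ 1 := by unfold ind; split_ifs <;> norm_num
lemma ind_mono {P Q : Prop} (h : P → Q) : ind P ≤ ind Q := by
  by_cases hp : P
  · rw [ind_true hp, ind_true (h hp)]
  · rw [ind_false hp]; exact ind_nonneg _
lemma ind_le_add {P Q S : Prop} (h : P → Q ∨ S) : ind P ≤ ind Q + ind S := by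
  by_cases hp : P
  · rcases h hp with h | h
    · rw [ind_true hp, ind_true h]; linarith [ind_nonneg S]
    · rw [ind_true hp, ind_true h]; linarith [ind_nonneg Q]
  · rw [ind_false hp]; linarith [ind_nonneg Q, ind_nonneg S]

noncomputable def Ex {Z : Type} [Fintype Z] {p : ℕ} (ρ : Fin p → Z → ℝ)
    (F : (Fin p → Z) → ℝ) : ℝ := by
  classical
  exact ∑ z : Fin p → Z, (∏ k, ρ k (z k)) * F z

/-- `IsLaw ρ`: each `ρ k` is a probability mass function. -/
def IsLaw {Z : Type} [Fintype Z] {p : ℕ} (ρ : Fin p → Z → ℝ) : Prop :=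
  (∀ k z, 0 ≤ ρ k z) ∧ ∀ k, ∑ z, ρ k z = 1

section ExBasic
variable {Z Y : Type} [Fintype Z] [Fintype Y] {p : ℕ}

lemma Ex_zero (ρ : Fin 0 → Z → ℝ) (F : (Fin 0 → Z) → ℝ) : Ex ρ F = F Fin.elim0 := by
  simp [Ex]
  congr 1

lemma Ex_succ (ρ : Fin (p+1) → Z → ℝ) (F : (Fin (p+1) → Z) → ℝ) :
    Ex ρ F = ∑ a : Z, ρ 0 a * Ex (fun k => ρ k.succ) (fun z => F (Fin.cons a z)) := by
  classical
  unfold Ex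
  rw [← (Fin.consEquiv (fun _ : Fin (p+1) => Z)).sum_comp, Fintype.sum_prod_type]
  refine Finset.sum_congr rfl fun a _ => ?_
  rw [Finset.mul_sum]
  refine Finset.sum_congr rfl fun z _ => ?_
  simp [Fin.consEquiv, Fin.prod_univ_succ, mul_assoc]

lemma Ex_add (ρ : Fin p → Z → ℝ) (F G : (Fin p → Z) → ℝ) :
    Ex ρ (fun z => F z + G z) = Ex ρ F + Ex ρ G := by
  simp [Ex, mul_add, Finset.sum_add_distrib]

lemma Ex_sub (ρ : Fin p → Z → ℝ) (F G : (Fin p → Z) → ℝ) :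
    Ex ρ (fun z => F z - G z) = Ex ρ F - Ex ρ G := by
  simp [Ex, mul_sub, Finset.sum_sub_distrib]

lemma Ex_cmul (ρ : Fin p → Z → ℝ) (c : ℝ) (F : (Fin p → Z) → ℝ) :
    Ex ρ (fun z => c * F z) = c * Ex ρ F := by
  simp only [Ex, Finset.mul_sum]
  exact Finset.sum_congr rfl fun z _ => by ring

lemma Ex_sum {ι : Type*} (s : Finset ι) (ρ : Fin p → Z → ℝ) (F : ι → (Fin p → Z) → ℝ) :
    Ex ρ (fun z => ∑ i ∈ s, F i z) = ∑ i ∈ s, Ex ρ (F i) := by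
  simp only [Ex, Finset.mul_sum]
  exact Finset.sum_comm

lemma Ex_comm {q : ℕ} (ρ : Fin p → Z → ℝ) (σ : Fin q → Y → ℝ)
    (F : (Fin p → Z) → (Fin q → Y) → ℝ) :
    Ex ρ (fun z => Ex σ (fun y => F z y)) = Ex σ (fun y => Ex ρ (fun z => F z y)) := by
  simp only [Ex, Finset.mul_sum]
  rw [Finset.sum_comm]
  exact Finset.sum_congr rfl fun y _ => Finset.sum_congr rfl fun z _ => by ring

lemma IsLaw.tail {ρ : Fin (p+1) → Z → ℝ} (h : IsLaw ρ) : IsLaw (fun k : Fin p => ρ k.succ) :=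
  ⟨fun k z => h.1 _ _, fun k => h.2 _⟩

lemma Ex_const {ρ : Fin p → Z → ℝ} (h : IsLaw ρ) (c : ℝ) : Ex ρ (fun _ => c) = c := by
  induction p with
  | zero => rw [Ex_zero]
  | succ p ih =>
    rw [Ex_succ, ]
    simp only [ih h.tail]
    rw [← Finset.sum_mul, h.2, one_mul]

lemma Ex_mono {ρ : Fin p → Z → ℝ} (h : IsLaw ρ) {F G : (Fin p → Z) → ℝ}
    (hFG : ∀ z, (∀ k, 0 < ρ k (z k)) → F z ≤ G z) : Ex ρ F ≤ Ex ρ G := by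
  unfold Ex
  refine Finset.sum_le_sum fun z _ => ?_
  by_cases hz : ∀ k, 0 < ρ k (z k)
  · exact mul_le_mul_of_nonneg_left (hFG z hz) (Finset.prod_nonneg fun k _ => h.1 _ _)
  · push Not at hz
    obtain ⟨k, hk⟩ := hz
    have : ∏ k, ρ k (z k) = 0 :=
      Finset.prod_eq_zero (Finset.mem_univ k) (le_antisymm hk (h.1 _ _))
    rw [this]; simp

lemma Ex_mono' {ρ : Fin p → Z → ℝ} (h : IsLaw ρ) {F G : (Fin p → Z) → ℝ}
    (hFG : ∀ z, F z ≤ G z) : Ex ρ F ≤ Ex ρ G := Ex_mono h fun z _ => hFG z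

lemma Ex_nonneg {ρ : Fin p → Z → ℝ} (h : IsLaw ρ) {F : (Fin p → Z) → ℝ}
    (hF : ∀ z, 0 ≤ F z) : 0 ≤ Ex ρ F := by
  have := Ex_mono' h (F := fun _ => 0) hF
  rwa [Ex_const h] at this

lemma Ex_le_one {ρ : Fin p → Z → ℝ} (h : IsLaw ρ) {F : (Fin p → Z) → ℝ}
    (hF : ∀ z, F z ≤ 1) : Ex ρ F ≤ 1 := by
  have := Ex_mono' h (G := fun _ => 1) hF
  rwa [Ex_const h] at this

lemma Ex_exists_le {ρ : Fin p → Z → ℝ} (h : IsLaw ρ) {F : (Fin p → Z) → ℝ} {c : ℝ}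
    (hF : Ex ρ F ≤ c) : ∃ z, F z ≤ c := by
  by_contra hc
  push Not at hc
  have hne : Nonempty (Fin p → Z) := by
    by_contra hemp
    rw [not_nonempty_iff] at hemp
    have := Ex_const h 1
    simp [Ex] at this
  obtain ⟨z0, hz0⟩ := Finite.exists_min F
  have h1 := Ex_mono' h (F := fun _ => F z0) hz0
  rw [Ex_const h] at h1
  linarith [hc z0]

lemma Ex_map (φ : Fin p → Z → Y) {ρ : Fin p → Z → ℝ} {σ : Fin p → Y → ℝ}
    (h : ∀ k (g : Y → ℝ), ∑ z, ρ k z * g (φ k z) = ∑ y, σ k y * g y)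
    (F : (Fin p → Y) → ℝ) :
    Ex ρ (fun z => F (fun k => φ k (z k))) = Ex σ F := by
  induction p with
  | zero =>
    rw [Ex_zero, Ex_zero]; congr 1; exact Subsingleton.elim _ _
  | succ p ih =>
    rw [Ex_succ, Ex_succ]
    rw [← h 0 (fun a => Ex (fun k => σ k.succ) (fun z => F (Fin.cons a z)))]
    refine Finset.sum_congr rfl fun a _ => ?_
    congr 1
    rw [← ih (fun k => φ k.succ) (fun k g => h k.succ g) (fun z => F (Fin.cons (φ 0 a) z))]
    congr 1
    funext z
    congr 1
    funext k
    refine Fin.cases ?_ (fun k => ?_) k <;> simp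

lemma Ex_prod (ρ : Fin p → Z → ℝ) (σ : Fin p → Y → ℝ) (F : (Fin p → Z × Y) → ℝ) :
    Ex (fun k (w : Z × Y) => ρ k w.1 * σ k w.2) F =
      Ex ρ (fun z => Ex σ (fun y => F (fun k => (z k, y k)))) := by
  induction p with
  | zero =>
    simp only [Ex_zero]; congr 1; exact Subsingleton.elim _ _
  | succ p ih =>
    simp only [Ex_succ]
    rw [Fintype.sum_prod_type]
    refine Finset.sum_congr rfl fun a _ => ?_
    rw [Ex_sum, Finset.mul_sum]
    refine Finset.sum_congr rfl fun b _ => ?_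
    rw [Ex_cmul, ih]
    rw [mul_assoc]
    congr 3
    funext z
    congr 1
    funext y
    congr 1
    funext k
    refine Fin.cases ?_ (fun k => ?_) k <;> simp

lemma Ex_single {ρ : Fin p → Z → ℝ} (h : IsLaw ρ) (k : Fin p) (g : Z → ℝ) :
    Ex ρ (fun z => g (z k)) = ∑ a, ρ k a * g a := by
  induction p with
  | zero => exact k.elim0
  | succ p ih =>
    rw [Ex_succ]
    refine Fin.cases ?_ (fun k => ?_) k
    · simp [Ex_const h.tail]
    · simp only [Fin.cons_succ]
      rw [ih h.tail, ← Finset.sum_mul, h.2, one_mul]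

end ExBasic


def mix {α : Type} {p : ℕ} (R : Finset (Fin p)) (y x : Fin p → α) : Fin p → α :=
  fun k => if k ∈ R then y k else x k

noncomputable def un (n : ℕ) {p : ℕ} : Fin p → Fin n → ℝ := fun _ _ => 1 / (n : ℝ)

lemma un_law {n p : ℕ} (hn : 0 < n) : IsLaw (un n (p := p)) := by
  refine ⟨fun k z => by unfold un; positivity, fun k => ?_⟩
  have : (n : ℝ) ≠ 0 := by positivity
  simp [un, this]

noncomputable def V {n p : ℕ} (f : (Fin p → Fin n) → Fin n) (R : Finset (Fin p)) : ℝ :=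
  Ex (un n) fun x => Ex (un n) fun y => ind (f x ≠ f (mix R y x))

lemma Ex_swap {Z : Type} [Fintype Z] {p : ℕ} (ρ : Fin p → Z → ℝ) (A : Finset (Fin p))
    (F : (Fin p → Z) → (Fin p → Z) → ℝ) :
    (Ex ρ fun x => Ex ρ fun y => F (mix A y x) (mix A x y)) = Ex ρ fun x => Ex ρ fun y => F x y := by
  have h1 := Ex_prod ρ ρ (fun w => F (mix A (fun k => (w k).2) (fun k => (w k).1))
    (mix A (fun k => (w k).1) (fun k => (w k).2)))
  have h2 := Ex_prod ρ ρ (fun w => F (fun k => (w k).1) (fun k => (w k).2))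
  simp only at h1 h2
  rw [← h1, ← h2]
  rw [← Ex_map (fun k (w : Z × Z) => if k ∈ A then w.swap else w)
    (ρ := fun k (w : Z × Z) => ρ k w.1 * ρ k w.2)]
  · congr 1
    funext w
    congr 1
    · funext k; simp only [mix]; split_ifs <;> rfl
    · funext k; simp only [mix]; split_ifs <;> rfl
  · intro k g
    by_cases hk : k ∈ A
    · simp only [hk, if_true]
      rw [← (Equiv.prodComm Z Z).sum_comp (fun w => ρ k w.1 * ρ k w.2 * g w)]
      refine Finset.sum_congr rfl fun w _ => ?_
      simp [mul_comm]
    · simp [hk]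

lemma Ex_mix {Z : Type} [Fintype Z] {p : ℕ} {ρ : Fin p → Z → ℝ} (hρ : IsLaw ρ)
    (A : Finset (Fin p)) (F : (Fin p → Z) → ℝ) :
    (Ex ρ fun x => Ex ρ fun y => F (mix A y x)) = Ex ρ F := by
  rw [Ex_swap ρ A (fun x _ => F x)]
  congr 1; funext x; exact Ex_const hρ _

lemma V_nonneg {n p : ℕ} (hn : 0 < n) (f : (Fin p → Fin n) → Fin n) (R) : 0 ≤ V f R :=
  Ex_nonneg (un_law hn) fun _ => Ex_nonneg (un_law hn) fun _ => ind_nonneg _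

lemma V_empty {n p : ℕ} (hn : 0 < n) (f : (Fin p → Fin n) → Fin n) : V f ∅ = 0 := by
  have : ∀ x y : Fin p → Fin n, ind (f x ≠ f (mix ∅ y x)) = 0 := by
    intro x y
    apply ind_false
    have : mix ∅ y x = x := by funext k; simp [mix]
    simp [this]
  simp only [V, this, Ex_const (un_law hn)]

lemma V_three {n p : ℕ} (hn : 0 < n) (f : (Fin p → Fin n) → Fin n) (R : Finset (Fin p)) :
    V f R = Ex (un n) fun x => Ex (un n) fun a => Ex (un n) fun b =>
      ind (f (mix R a x) ≠ f (mix R b x)) := by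
  unfold V
  rw [← Ex_mix (un_law hn) R]
  congr 1; funext x; congr 1; funext a; congr 1; funext b
  congr 3
  funext k; simp only [mix]; split_ifs <;> rfl

lemma V_union {n p : ℕ} (hn : 0 < n) (f : (Fin p → Fin n) → Fin n) {A B : Finset (Fin p)}
    (hAB : Disjoint A B) : V f (A ∪ B) ≤ V f A + V f B := by
  have hB : V f B = Ex (un n) fun x => Ex (un n) fun y =>
      ind (f (mix A y x) ≠ f (mix (A ∪ B) y x)) := by
    unfold V
    rw [← Ex_swap (un n) A]
    congr 1; funext x; congr 1; funext y
    congr 3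
    funext k
    have : k ∈ A → k ∉ B := fun h => Finset.disjoint_left.1 hAB h
    simp only [mix, Finset.mem_union]
    by_cases h1 : k ∈ A <;> by_cases h2 : k ∈ B <;> simp_all
  rw [hB]
  unfold V
  rw [← Ex_add]
  refine Ex_mono' (un_law hn) fun x => ?_
  rw [← Ex_add]
  refine Ex_mono' (un_law hn) fun y => ?_
  apply ind_le_add
  intro h
  by_contra hc
  push Not at hc
  exact h (hc.1.trans hc.2)

lemma unifPr_eq {n p : ℕ} (P : (Fin p → Fin n) → Prop) :
    unifPr P = Ex (un n) (fun x => ind (P x)) := by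
  classical
  unfold unifPr Ex un ind
  rw [Nat.card_eq_fintype_card, Fintype.card_subtype]
  simp [← Finset.mul_sum, div_eq_mul_inv, mul_comm, Finset.sum_ite]

lemma prodPr_eq {α : Type} [Fintype α] (μ : α → ℝ) (p : ℕ) (P : (Fin p → α) → Prop) :
    prodPr μ p P = Ex (fun _ => μ) (fun x => ind (P x)) := by
  classical
  unfold prodPr Ex ind
  refine Finset.sum_congr rfl fun x _ => ?_
  split_ifs <;> simp_all

lemma ind_not (P : Prop) : ind (¬ P) = 1 - ind P := by
  by_cases h : P
  · rw [ind_true h, ind_false (by simpa using h)]; ring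
  · rw [ind_false h, ind_true h]; ring

lemma marg {m n : ℕ} (hn : 0 < n) (μ : (Fin m → Fin n) → ℝ)
    (hsum : ∑ x : Fin m → Fin n, μ x = 1)
    (hinv : ∀ π : Equiv.Perm (Fin n), ∀ x : Fin m → Fin n,
      μ (fun i => π (x i)) = μ x) (i : Fin m) (g : Fin n → ℝ) :
    ∑ x, μ x * g (x i) = ∑ a, 1 / (n : ℝ) * g a := by
  classical
  set ν : Fin n → ℝ := fun a => ∑ x : Fin m → Fin n, if x i = a then μ x else 0 with hν
  have hswap : ∀ a b, ν a = ν b := by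
    intro a b
    simp only [hν]
    rw [← (Equiv.arrowCongr (Equiv.refl (Fin m)) (Equiv.swap a b)).sum_comp]
    refine Finset.sum_congr rfl fun x _ => ?_
    have : μ ((Equiv.arrowCongr (Equiv.refl (Fin m)) (Equiv.swap a b)) x) = μ x := hinv (Equiv.swap a b) x
    rw [this]
    have h2 : ((Equiv.arrowCongr (Equiv.refl (Fin m)) (Equiv.swap a b)) x) i = a ↔ x i = b := by
      change Equiv.swap a b (x i) = a ↔ _
      rw [← Equiv.apply_eq_iff_eq (Equiv.swap a b)]; simp
    simp only [h2]
  have htot : ∀ g : Fin n → ℝ, ∑ x, μ x * g (x i) = ∑ a, ν a * g a := by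
    intro g
    simp only [hν, Finset.sum_mul]
    rw [Finset.sum_comm]
    refine Finset.sum_congr rfl fun x _ => ?_
    simp [ite_mul]
  rw [htot]
  refine Finset.sum_congr rfl fun a _ => ?_
  congr 1
  have h1 := htot (fun _ => 1)
  simp only [mul_one, hsum] at h1
  rw [Finset.sum_congr rfl (fun b _ => hswap b a)] at h1
  simp only [Finset.sum_const, Finset.card_univ, Fintype.card_fin, nsmul_eq_mul] at h1
  have : (n : ℝ) ≠ 0 := by positivity
  field_simp; linarith


lemma exists_inj {m n : ℕ} (hnm : n ≤ m) {i j : Fin m} (hij : i ≠ j) {a b : Fin n} (hab : a ≠ b) :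
    ∃ e : Fin n → Fin m, Function.Injective e ∧ e a = i ∧ e b = j := by
  set e0 : Fin n → Fin m := Fin.castLE hnm
  have he0 : Function.Injective e0 := Fin.castLE_injective hnm
  set σ1 := Equiv.swap (e0 a) i
  set σ := Equiv.swap (σ1 (e0 b)) j
  have h1 : σ1 (e0 a) = i := Equiv.swap_apply_left _ _
  refine ⟨fun c => σ (σ1 (e0 c)), fun c d h => he0 (σ1.injective (σ.injective h)), ?_, ?_⟩
  · simp only [h1]
    apply Equiv.swap_apply_of_ne_of_ne _ hij
    rw [← h1]
    intro h
    exact hab (he0 (σ1.injective h))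
  · simp [σ]

lemma exact_dict {m n : ℕ} (hnm : n ≤ m) (hn : 2 ≤ n) (φ : Fin m → Fin n → Fin n)
    (hnc : ∀ i c, ∃ a, φ i a ≠ c)
    (hs : ∀ x : Fin m → Fin n, Function.Surjective x → Function.Surjective fun i => φ i (x i)) :
    ∃ π : Equiv.Perm (Fin n), ∀ i a, φ i a = π a := by
  have E1 : ∀ e : Fin n → Fin m, Function.Injective e →
      Function.Surjective fun a => φ (e a) a := by
    intro e he c
    choose ch hch using fun i => hnc i c
    obtain ⟨i, hi⟩ := hs (Function.extend e id ch) (fun a => ⟨e a, by rw [he.extend_apply]; rfl⟩) c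
    by_cases h : ∃ a, e a = i
    · obtain ⟨a, rfl⟩ := h
      refine ⟨a, ?_⟩
      simp only [he.extend_apply] at hi
      exact hi
    · simp only [Function.extend_apply' _ _ _ h] at hi
      exact absurd hi (hch i)
  have H : ∀ i j a b, i ≠ j → a ≠ b → φ i a ≠ φ j b := by
    intro i j a b hij hab h
    obtain ⟨e, he, rfl, rfl⟩ := exists_inj hnm hij hab
    exact hab (Finite.injective_iff_surjective.2 (E1 e he) h)
  have H2 : ∀ i j a, i ≠ j → φ j a = φ i a := by
    intro i j a hij
    obtain ⟨b, hb⟩ := hnc i (φ i a)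
    have hba : b ≠ a := by rintro rfl; exact hb rfl
    obtain ⟨e, he, h1, h2⟩ := exists_inj hnm hij hba
    obtain ⟨d, hd⟩ := E1 e he (φ i a)
    simp only at hd
    by_cases hda : d = a
    · subst hda; rw [h2] at hd; exact hd
    by_cases hdb : d = b
    · subst hdb; rw [h1] at hd; exact absurd hd hb
    · exfalso
      refine H (e d) i d a ?_ hda hd
      rw [← h1]; intro h; exact hdb (he h)
  let i0 : Fin m := ⟨0, by omega⟩
  let i1 : Fin m := ⟨1, by omega⟩
  have h01 : i0 ≠ i1 := by simp [i0, i1]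
  have hinj : Function.Injective (φ i0) := by
    intro a b hab
    by_contra hc
    refine H i0 i1 a b h01 hc ?_
    rw [H2 i0 i1 b h01]; exact hab
  refine ⟨Equiv.ofBijective (φ i0) (Finite.injective_iff_bijective.1 hinj), fun i a => ?_⟩
  rw [Equiv.ofBijective_apply]
  by_cases h : i0 = i
  · rw [h]
  · exact H2 _ _ _ h

lemma V_univ_gt {n p : ℕ} (hn : 0 < n) (f : (Fin p → Fin n) → Fin n) {ε : ℝ}
    (hf : ∀ c, Ex (un n) (fun x => ind (f x = c)) < 1 - ε) : ε < V f Finset.univ := by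
  by_contra hc
  push Not at hc
  unfold V at hc
  rw [Ex_comm] at hc
  obtain ⟨y, hy⟩ := Ex_exists_le (un_law hn) hc
  have h1 := hf (f y)
  have h2 : ∀ x, mix Finset.univ y x = y := by intro x; funext k; simp [mix]
  simp only [h2, ne_eq, ind_not, Ex_sub, Ex_const (un_law hn)] at hy
  linarith

lemma V_compl_le {n p : ℕ} (hn : 0 < n) (f : (Fin p → Fin n) → Fin n) (A : Finset (Fin p)) :
    V f Finset.univ ≤ V f A + V f Aᶜ := by
  have := V_union hn f (disjoint_compl_right (a := A))
  rwa [show A ∪ Aᶜ = Finset.univ from sup_compl_eq_top] at this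

lemma dict {m n p : ℕ} (hm : 2 ≤ m) (hn : 0 < n) (f : Fin m → (Fin p → Fin n) → Fin n)
    {ε κ : ℝ} (hκ : 0 < κ) (hκε : 3 * κ < ε)
    (hf : ∀ i c, Ex (un n) (fun x => ind (f i x = c)) < 1 - ε)
    (hkey : ∀ R i l, i ≠ l → V (f l) R ≤ κ ∨ V (f i) Rᶜ ≤ κ) :
    ∃ k, ∀ l, V (f l) {k}ᶜ ≤ κ := by
  classical
  have hV : ∀ i, ε < V (f i) Finset.univ := fun i => V_univ_gt hn _ (hf i)
  have hdich : ∀ R, (∀ l, V (f l) R ≤ κ) ∨ (∀ l, V (f l) Rᶜ ≤ κ) := by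
    intro R
    by_contra hc
    push Not at hc
    obtain ⟨⟨l, hl⟩, ⟨i, hi⟩⟩ := hc
    by_cases hil : i = l
    · subst hil
      obtain ⟨j, hj⟩ : ∃ j : Fin m, j ≠ i := by
        have : Nontrivial (Fin m) := Fin.nontrivial_iff_two_le.2 hm
        exact exists_ne i
      have h1 := (hkey R i j hj.symm).resolve_right (not_le.2 hi)
      have h2 := (hkey R j i hj).resolve_left (not_le.2 hl)
      linarith [V_compl_le hn (f j) R, hV j]
    · rcases hkey R i l hil with h | h <;> linarith
  let big : Finset (Fin p) → Prop := fun R => ∀ l, V (f l) Rᶜ ≤ κ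
  have hex : ∃ R, big R := ⟨Finset.univ, fun l => by rw [Finset.compl_univ, V_empty hn]; exact hκ.le⟩
  obtain ⟨R, hR, hmin⟩ := exists_minimal_of_wellFoundedLT big hex
  have l0 : Fin m := ⟨0, by omega⟩
  have hne : R.Nonempty := by
    by_contra h
    rw [Finset.not_nonempty_iff_eq_empty] at h
    subst h
    have := hR l0
    rw [Finset.compl_empty] at this
    linarith [hV l0]
  obtain ⟨k, hk⟩ := hne
  by_cases hRk : R = {k}
  · subst hRk; exact ⟨k, hR⟩
  exfalso
  have small : ∀ T, T ⊆ R → T ≠ R → ∀ l, V (f l) T ≤ κ := by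
    intro T hT hTR
    refine (hdich T).resolve_right fun h => ?_
    exact hTR (le_antisymm hT (hmin h hT))
  have hs1 := small {k} (by simpa using hk) (Ne.symm hRk) l0
  have hs2 := small (R \ {k}) Finset.sdiff_subset (by
    intro h; have : k ∉ R \ {k} := by simp
    rw [h] at this; exact this hk) l0
  have hd : Disjoint ({k} : Finset (Fin p)) (R \ {k}) := Finset.disjoint_sdiff
  have h3 := V_union hn (f l0) hd
  rw [Finset.union_sdiff_of_subset (by simpa using hk)] at h3
  linarith [V_compl_le hn (f l0) R, hV l0, hR l0]

def KeyClaim (m n : ℕ) (μ : (Fin m → Fin n) → ℝ) : Prop :=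
  ∀ ε κ : ℝ, 0 < ε → 0 < κ → ∃ δ > (0 : ℝ), ∀ p : ℕ, ∀ f : Fin m → (Fin p → Fin n) → Fin n,
    Ex (fun _ => μ) (fun x => ind (¬ Function.Surjective (fun i => f i (fun k => x k i)))) ≤ δ →
    (∀ i, ε < V (f i) Finset.univ) →
    ∀ R i l, i ≠ l → V (f l) R ≤ κ ∨ V (f i) Rᶜ ≤ κ

lemma exists_beta {m n : ℕ} (μ : (Fin m → Fin n) → ℝ)
    (hsupp : ∀ x : Fin m → Fin n, 0 < μ x ↔ Function.Surjective x) :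
    ∃ β > (0 : ℝ), ∀ x, Function.Surjective x → β ≤ μ x := by
  classical
  by_cases h : Nonempty {x : Fin m → Fin n // Function.Surjective x}
  · obtain ⟨x0, hx0⟩ := Finite.exists_min (fun x : {x : Fin m → Fin n // Function.Surjective x} => μ x)
    exact ⟨μ x0, (hsupp _).2 x0.2, fun x hx => hx0 ⟨x, hx⟩⟩
  · exact ⟨1, one_pos, fun x hx => absurd ⟨⟨x, hx⟩⟩ h⟩

theorem ending (m n : ℕ) (hnm : n ≤ m) (hn : 2 ≤ n)
    (μ : (Fin m → Fin n) → ℝ)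
    (hnonneg : ∀ x, 0 ≤ μ x)
    (hsum : ∑ x : Fin m → Fin n, μ x = 1)
    (hsupp : ∀ x : Fin m → Fin n, 0 < μ x ↔ Function.Surjective x)
    (hinv : ∀ π : Equiv.Perm (Fin n), ∀ x : Fin m → Fin n,
      μ (fun i => π (x i)) = μ x) (hkey : KeyClaim m n μ) :
    ∃ ε₀ > (0 : ℝ), ∀ ε : ℝ, 0 < ε → ε < ε₀ → ∃ δ > (0 : ℝ), ∀ p : ℕ,
      ∀ f : Fin m → (Fin p → Fin n) → Fin n,
        prodPr μ p (fun xs => Function.Surjective (fun i => f i (fun k => xs k i)))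
            ≥ 1 - δ →
        (∀ i : Fin m, ∀ c : Fin n,
          unifPr (fun x : Fin p → Fin n => f i x = c) < 1 - ε) →
        ∃ k : Fin p, ∃ π : Equiv.Perm (Fin n), ∀ i : Fin m,
          unifPr (fun x : Fin p → Fin n => f i x = π (x k)) ≥ 1 - ε := by
  have hn0 : 0 < n := by omega
  have hm0 : (0 : ℝ) < m := by exact_mod_cast (by omega : 0 < m)
  obtain ⟨β, hβ, hβμ⟩ := exists_beta μ hsupp
  refine ⟨1, one_pos, fun ε hε _ => ?_⟩
  set κ := min (ε / 4) (β / (3 * m)) with hκdef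
  have hκ : 0 < κ := by positivity
  have hκ1 : κ ≤ ε / 4 := min_le_left _ _
  have hκ2 : m * κ ≤ β / 3 := by
    have : κ ≤ β / (3 * m) := min_le_right _ _
    calc m * κ ≤ m * (β / (3 * m)) := by gcongr
      _ = β / 3 := by field_simp
  obtain ⟨δ0, hδ0, hK⟩ := hkey ε κ hε hκ
  refine ⟨min δ0 (β / 3), by positivity, fun p f hpoly hnc => ?_⟩
  have hμlaw : IsLaw (fun _ : Fin p => μ) := ⟨fun _ x => hnonneg x, fun _ => hsum⟩
  rw [prodPr_eq] at hpoly
  simp only [unifPr_eq] at hnc ⊢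
  have hbad : Ex (fun _ : Fin p => μ)
      (fun x => ind (¬ Function.Surjective (fun i => f i (fun k => x k i)))) ≤ min δ0 (β / 3) := by
    simp only [ind_not, Ex_sub, Ex_const hμlaw]
    linarith
  have hV : ∀ i, ε < V (f i) Finset.univ := fun i => V_univ_gt hn0 _ (hnc i)
  obtain ⟨k, hk⟩ := dict (by omega) hn0 f hκ (by linarith) hnc
    (hK p f (hbad.trans (min_le_left _ _)) hV)
  have hφ : ∀ i, ∃ φ : Fin n → Fin n, Ex (un n) (fun x => ind (f i x ≠ φ (x k))) ≤ κ := by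
    intro i
    have h := hk i
    unfold V at h
    rw [Ex_comm] at h
    obtain ⟨y, hy⟩ := Ex_exists_le (un_law hn0) h
    refine ⟨fun a => f i (fun j => if j = k then a else y j), ?_⟩
    convert hy using 6 with x
    funext j
    by_cases hj : j = k
    · subst hj; simp [mix]
    · simp [mix, hj]
  choose φ hφ using hφ
  have hμ : ∀ i (F : (Fin p → Fin n) → ℝ), Ex (fun _ => μ) (fun x => F (fun k => x k i))
      = Ex (un n) F := fun i F =>
    Ex_map (fun _ (x : Fin m → Fin n) => x i) (fun k g => marg hn0 μ hsum hinv i g) F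
  obtain ⟨π, hπ⟩ := exact_dict hnm hn φ (by
    intro i c
    by_contra hc
    push Not at hc
    have h1 := hφ i
    simp only [hc, ne_eq, ind_not, Ex_sub, Ex_const (un_law hn0)] at h1
    linarith [hnc i c]) (by
    intro x0 hx0
    by_contra hc
    have h1 : β ≤ Ex (fun _ : Fin p => μ)
        (fun x => ind (¬ Function.Surjective (fun i => φ i (x k i)))) := by
      rw [Ex_single hμlaw k (fun x => ind (¬ Function.Surjective (fun i => φ i (x i))))]
      calc β ≤ μ x0 * ind (¬ Function.Surjective (fun i => φ i (x0 i))) := by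
            rw [ind_true hc, mul_one]; exact hβμ x0 hx0
        _ ≤ _ := Finset.single_le_sum
            (f := fun x => μ x * ind (¬ Function.Surjective (fun i => φ i (x i))))
            (fun x _ => mul_nonneg (hnonneg x) (ind_nonneg _)) (Finset.mem_univ x0)
    have h2 : Ex (fun _ : Fin p => μ)
        (fun x => ind (¬ Function.Surjective (fun i => φ i (x k i)))) ≤
        Ex (fun _ : Fin p => μ)
          (fun x => ind (¬ Function.Surjective (fun i => f i (fun k => x k i))) +
          ∑ i, ind (f i (fun k => x k i) ≠ φ i (x k i))) := by
      refine Ex_mono' hμlaw fun x => ?_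
      have hsn : 0 ≤ ∑ i, ind (f i (fun k => x k i) ≠ φ i (x k i)) :=
        Finset.sum_nonneg fun i _ => ind_nonneg _
      by_cases hall : ∀ i, f i (fun k => x k i) = φ i (x k i)
      · simp only [hall]; simp only [hall] at hsn; linarith
      · push Not at hall
        obtain ⟨i, hi⟩ := hall
        have := Finset.single_le_sum (f := fun i => ind (f i (fun k => x k i) ≠ φ i (x k i)))
          (fun i _ => ind_nonneg _) (Finset.mem_univ i)
        simp only [ind_true hi] at this
        linarith [ind_le_one (¬ Function.Surjective (fun i => φ i (x k i))),
          ind_nonneg (¬ Function.Surjective (fun i => f i (fun k => x k i)))]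
    rw [Ex_add, Ex_sum] at h2
    have h3 : ∑ i, Ex (fun _ : Fin p => μ) (fun x => ind (f i (fun k => x k i) ≠ φ i (x k i)))
        ≤ m * κ := by
      calc _ ≤ ∑ i : Fin m, κ := Finset.sum_le_sum fun i _ => by
            rw [hμ i (fun x => ind (f i x ≠ φ i (x k)))]; exact hφ i
        _ = m * κ := by simp
    have h4 := hbad.trans (min_le_right _ _)
    linarith)
  refine ⟨k, π, fun i => ?_⟩
  have h1 := hφ i
  simp only [hπ, ne_eq, ind_not, Ex_sub, Ex_const (un_law hn0)] at h1
  linarith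


lemma pow_lb (K : ℕ) (v : ℝ) (h1 : -1 ≤ K * v) (h0 : 0 ≤ 1 + v) :
    ∀ k : ℕ, k ≤ K → 1 + k * v + k * (k - 1) / 4 * v ^ 2 ≤ (1 + v) ^ k := by
  intro k
  induction k with
  | zero => intro _; simp
  | succ k ih =>
    intro hk
    have h := ih (by omega)
    rw [pow_succ]
    have h2 := mul_le_mul_of_nonneg_right h h0
    refine le_trans ?_ h2
    have hkK : (k : ℝ) + 1 ≤ K := by exact_mod_cast hk
    have hk0 : (0 : ℝ) ≤ k := by positivity
    have : 0 ≤ k * v ^ 2 * (1 / 2 + (k - 1) * v / 4) := by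
      rcases Nat.eq_zero_or_pos k with hk1 | hk1
      · simp [hk1]
      have hk2 : (1 : ℝ) ≤ k := by exact_mod_cast hk1
      have hkv : -2 ≤ (k - 1) * v := by
        rcases le_or_gt 0 v with hv | hv
        · nlinarith
        · nlinarith
      apply mul_nonneg (by positivity); linarith
    push_cast
    nlinarith

section onestep
variable {Z : Type} [Fintype Z]

lemma atom_le {ρ g : Z → ℝ} (hρ : ∀ z, 0 ≤ ρ z) (hg : ∀ z, 0 < ρ z → 0 ≤ g z) {c : ℝ} {z : Z}
    (hc0 : 0 < c) (hc : c ≤ ρ z) : c * g z ≤ ∑ z, ρ z * g z := by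
  have h1 : ∀ z, 0 ≤ ρ z * g z := by
    intro z
    rcases (hρ z).eq_or_lt with h | h
    · rw [← h]; simp
    · exact mul_nonneg h.le (hg z h)
  calc c * g z ≤ ρ z * g z := mul_le_mul_of_nonneg_right hc (hg z (hc0.trans_le hc))
    _ ≤ _ := Finset.single_le_sum (f := fun z => ρ z * g z) (fun z _ => h1 z) (Finset.mem_univ z)

lemma avg_exists {ρ : Z → ℝ} (hρ : ∀ z, 0 ≤ ρ z) (hs : ∑ z, ρ z = 1) (g : Z → ℝ) :
    ∃ z, 0 < ρ z ∧ ∑ z, ρ z * g z ≤ g z := by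
  by_contra hc
  push Not at hc
  set E := ∑ z, ρ z * g z with hE
  have h1 : ∀ z, ρ z * g z ≤ ρ z * E := by
    intro z
    rcases (hρ z).eq_or_lt with h | h
    · rw [← h]; simp
    · exact mul_le_mul_of_nonneg_left (hc z h).le h.le
  obtain ⟨z0, hz0⟩ : ∃ z, 0 < ρ z := by
    by_contra h
    push Not at h
    have : ∑ z, ρ z ≤ 0 := Finset.sum_nonpos fun z _ => h z
    linarith
  have h2 : ∑ z, ρ z * g z < ∑ z, ρ z * E := by
    apply Finset.sum_lt_sum (fun z _ => h1 z) ⟨z0, Finset.mem_univ _, ?_⟩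
    exact mul_lt_mul_of_pos_left (hc z0 hz0) hz0
  rw [← Finset.sum_mul, hs, one_mul] at h2
  exact lt_irrefl _ h2

/-- exchange property -/
def Exch {Ω₁ Ω₂ : Type*} (c0 : ℝ) (ρ : Z → ℝ) (α : Z → Ω₁) (β : Z → Ω₂) : Prop :=
  ∀ z1 z2, 0 < ρ z1 → 0 < ρ z2 → ∃ z, c0 ≤ ρ z ∧ α z = α z1 ∧ β z = β z2

lemma Exch.symm {Ω₁ Ω₂ : Type*} {c0 : ℝ} {ρ : Z → ℝ} {α : Z → Ω₁} {β : Z → Ω₂}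
    (h : Exch c0 ρ α β) : Exch c0 ρ β α := fun z1 z2 h1 h2 => by
  obtain ⟨z, a, b, c⟩ := h z2 z1 h2 h1
  exact ⟨z, a, c, b⟩

lemma half {c0 : ℝ} (hc0 : 0 < c0) {ρ s r : Z → ℝ} (hρ : ∀ z, 0 ≤ ρ z) (hs : ∑ z, ρ z = 1)
    (hr : ∑ z, ρ z * r z = 0) (hx : Exch c0 ρ s r) :
    c0 * ∑ z, ρ z * s z ^ 2 ≤ ∑ z, ρ z * (s z + r z) ^ 2 := by
  obtain ⟨z1, h1, h1'⟩ := avg_exists hρ hs (fun z => s z ^ 2)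
  obtain ⟨z2, h2, h2'⟩ : ∃ z2, 0 < ρ z2 ∧ 0 ≤ s z1 * r z2 := by
    rcases le_total 0 (s z1) with h | h
    · obtain ⟨z2, h2, h2'⟩ := avg_exists hρ hs r
      rw [hr] at h2'
      exact ⟨z2, h2, mul_nonneg h h2'⟩
    · obtain ⟨z2, h2, h2'⟩ := avg_exists hρ hs (fun z => - r z)
      simp only [mul_neg, Finset.sum_neg_distrib, hr] at h2'
      exact ⟨z2, h2, by nlinarith⟩
  obtain ⟨z, hz, ha, hb⟩ := hx z1 z2 h1 h2
  have := atom_le hρ (g := fun z => (s z + r z) ^ 2) (fun z _ => sq_nonneg _) hc0 hz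
  refine le_trans ?_ this
  apply mul_le_mul_of_nonneg_left _ hc0.le
  refine h1'.trans ?_
  rw [ha, hb]
  nlinarith [sq_nonneg (r z2)]

lemma lower {c0 t : ℝ} (hc0 : 0 < c0) (ht : 0 ≤ t) {ρ s : Z → ℝ} (hρ : ∀ z, 0 ≤ ρ z)
    (hs : ∑ z, ρ z = 1)
    (h0 : ∑ z, ρ z * s z = 0) (hle : ∀ z, 0 < ρ z → s z ≤ t) {z z1 : Z}
    (hz : c0 ≤ ρ z) (hzz : s z = s z1) : - t ≤ c0 * s z1 := by
  have := atom_le hρ (g := fun z => t - s z) (fun z h => by linarith [hle z h]) hc0 hz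
  simp only [mul_sub, Finset.sum_sub_distrib, ← Finset.sum_mul, hs, h0, hzz] at this
  nlinarith

set_option maxHeartbeats 1000000 in
lemma caseTwo {c0 : ℝ} (hc0 : 0 < c0) (hc1 : c0 ≤ 1) (K : ℕ) (hK : 1 + 16 / c0 ≤ K)
    {ρ s r : Z → ℝ} (hρ : ∀ z, 0 ≤ ρ z) (hs : ∑ z, ρ z = 1)
    (hs0 : ∑ z, ρ z * s z = 0) (hr0 : ∑ z, ρ z * r z = 0) (hx : Exch c0 ρ s r)
    (hsle : ∀ z, 0 < ρ z → s z ≤ c0 * (c0 / (4 * K)))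
    (hrle : ∀ z, 0 < ρ z → r z ≤ c0 * (c0 / (4 * K))) :
    1 ≤ ∑ z, ρ z * ((1 + s z) * (1 + r z)) ^ K := by
  have hK1 : (1 : ℝ) ≤ K := by
    have : 0 < 16 / c0 := by positivity
    linarith
  set τ := c0 / (4 * K) with hτ
  have hτ0 : 0 < τ := by positivity
  have hτK : τ * (4 * K) = c0 := by rw [hτ]; field_simp
  have hτ4 : 4 * τ ≤ c0 := by nlinarith
  have hsge : ∀ z, 0 < ρ z → - τ ≤ s z := by
    intro z hz
    obtain ⟨z', h1, h2, h3⟩ := hx z z hz hz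
    have := lower hc0 (by positivity) hρ hs hs0 hsle h1 h2
    nlinarith
  have hrge : ∀ z, 0 < ρ z → - τ ≤ r z := by
    intro z hz
    obtain ⟨z', h1, h2, h3⟩ := hx z z hz hz
    have := lower hc0 (by positivity) hρ hs hr0 hrle h1 h3
    nlinarith
  have hsle' : ∀ z, 0 < ρ z → s z ≤ τ := fun z hz => (hsle z hz).trans (by nlinarith)
  have hrle' : ∀ z, 0 < ρ z → r z ≤ τ := fun z hz => (hrle z hz).trans (by nlinarith)
  set A := ∑ z, ρ z * s z ^ 2
  set B := ∑ z, ρ z * r z ^ 2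
  set W := ∑ z, ρ z * (s z + r z) ^ 2
  have hA0 : 0 ≤ A := Finset.sum_nonneg fun z _ => mul_nonneg (hρ z) (sq_nonneg _)
  have hB0 : 0 ≤ B := Finset.sum_nonneg fun z _ => mul_nonneg (hρ z) (sq_nonneg _)
  have hW1 : c0 * A ≤ W := half hc0 hρ hs hr0 hx
  have hW2 : c0 * B ≤ W := by
    have := half hc0 hρ hs hs0 hx.symm
    simpa [W, add_comm] using this
  set C := (K : ℝ) * (K - 1) / 4 with hC
  have hC0 : 0 ≤ C := by rw [hC]; apply div_nonneg (mul_nonneg _ _) <;> linarith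
  have hterm : ∀ z, ρ z * (1 + K * (s z + r z) - K * (s z ^ 2 + r z ^ 2) / 2
      + C * ((s z + r z) ^ 2 / 2 - τ ^ 2 * s z ^ 2)) ≤ ρ z * ((1 + s z) * (1 + r z)) ^ K := by
    intro z
    rcases (hρ z).eq_or_lt with h | h
    · rw [← h]; simp
    apply mul_le_mul_of_nonneg_left _ h.le
    have a1 := hsge z h
    have a2 := hrge z h
    have a3 := hsle' z h
    have a4 := hrle' z h
    have hsr : -(τ * τ) ≤ s z * r z := by
      have : |s z * r z| ≤ τ * τ := by
        rw [abs_mul]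
        exact mul_le_mul (abs_le.2 ⟨a1, a3⟩) (abs_le.2 ⟨a2, a4⟩) (abs_nonneg _) hτ0.le
      exact (abs_le.1 this).1
    have hv := pow_lb K (s z + r z + s z * r z) (by nlinarith) (by nlinarith) K le_rfl
    rw [show (1 + s z) * (1 + r z) = 1 + (s z + r z + s z * r z) by ring]
    refine le_trans ?_ hv
    rw [← hC]
    have b1 : -(s z ^ 2 + r z ^ 2) / 2 ≤ s z * r z := by nlinarith [sq_nonneg (s z + r z)]
    have b2 : r z ^ 2 ≤ τ ^ 2 := by apply sq_le_sq' <;> linarith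
    have b3 : (s z * r z) ^ 2 ≤ τ ^ 2 * s z ^ 2 := by
      rw [mul_pow]; nlinarith [sq_nonneg (s z)]
    have b4 : (s z + r z) ^ 2 / 2 - τ ^ 2 * s z ^ 2 ≤ (s z + r z + s z * r z) ^ 2 := by
      nlinarith [sq_nonneg (s z + r z + 2 * (s z * r z))]
    have b5 := mul_le_mul_of_nonneg_left b4 hC0
    have b6 := mul_le_mul_of_nonneg_left b1 (by linarith : (0 : ℝ) ≤ K)
    linarith
  refine le_trans ?_ (Finset.sum_le_sum fun z _ => hterm z)
  have hexp : ∑ z, ρ z * (1 + K * (s z + r z) - K * (s z ^ 2 + r z ^ 2) / 2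
      + C * ((s z + r z) ^ 2 / 2 - τ ^ 2 * s z ^ 2)) =
      ∑ z, ρ z + K * (∑ z, ρ z * s z + ∑ z, ρ z * r z) - K * (A + B) / 2 + C * (W / 2 - τ ^ 2 * A) := by
    simp only [A, B, W, Finset.mul_sum, mul_add, Finset.sum_div, ← Finset.sum_add_distrib, ← Finset.sum_sub_distrib, mul_sub]
    refine Finset.sum_congr rfl fun z _ => ?_
    ring
  rw [hexp, hs, hs0, hr0]
  have hτ2 : τ ^ 2 ≤ c0 / 16 := by nlinarith
  have hW : c0 * (A + B) / 8 ≤ W / 2 - τ ^ 2 * A := by nlinarith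
  have hCc : (K : ℝ) / 2 ≤ C * (c0 / 8) := by
    have : 16 ≤ (K - 1) * c0 := by
      have h : 16 / c0 ≤ K - 1 := by linarith
      rwa [div_le_iff₀ hc0] at h
    rw [hC]; nlinarith
  nlinarith [mul_le_mul_of_nonneg_left hW hC0, mul_le_mul_of_nonneg_right hCc (add_nonneg hA0 hB0)]

end onestep

lemma oneStep1 {c0 : ℝ} (hc0 : 0 < c0) (hc1 : c0 ≤ 1) : ∃ K : ℕ, 0 < K ∧
    ∀ (Z : Type) [Fintype Z] (ρ α β : Z → ℝ), (∀ z, 0 ≤ ρ z) → ∑ z, ρ z = 1 →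
      (∀ z, 0 ≤ α z) → (∀ z, 0 ≤ β z) → Exch c0 ρ α β →
      ∑ z, ρ z * α z = 1 → ∑ z, ρ z * β z = 1 → 1 ≤ ∑ z, ρ z * (α z * β z) ^ K := by
  obtain ⟨K1, hK1⟩ := exists_nat_ge (1 + 16 / c0)
  have hK1' : (1 : ℝ) ≤ K1 := by
    have : 0 < 16 / c0 := by positivity
    linarith
  set t := c0 * (c0 / (4 * K1)) with ht
  have ht0 : 0 < t := by positivity
  obtain ⟨K2, hK2⟩ := exists_nat_ge (1 / (c0 * t))
  have hK2' : (0 : ℝ) < K2 := lt_of_lt_of_le (by positivity) hK2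
  refine ⟨K1 * K2, by
    have : (0 : ℝ) < (K1 * K2 : ℕ) := by push_cast; positivity
    exact_mod_cast this, ?_⟩
  intro Z _ ρ α β hρ hs hα hβ hx ha hb
  by_cases hcase : ∃ z, 0 < ρ z ∧ (1 + t ≤ α z ∨ 1 + t ≤ β z)
  · obtain ⟨z, hz, hz1, hz2⟩ : ∃ z, c0 ≤ ρ z ∧ 1 + t ≤ α z * β z ∧ True := by
      obtain ⟨z0, h0, h | h⟩ := hcase
      · obtain ⟨z1, h1, h1'⟩ := avg_exists hρ hs β
        rw [hb] at h1'
        obtain ⟨z, h2, h3, h4⟩ := hx z0 z1 h0 h1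
        exact ⟨z, h2, by rw [h3, h4]; nlinarith, trivial⟩
      · obtain ⟨z1, h1, h1'⟩ := avg_exists hρ hs α
        rw [ha] at h1'
        obtain ⟨z, h2, h3, h4⟩ := hx z1 z0 h1 h0
        exact ⟨z, h2, by rw [h3, h4]; nlinarith, trivial⟩
    have h1 := atom_le hρ (g := fun z => (α z * β z) ^ (K1 * K2))
      (fun z _ => pow_nonneg (mul_nonneg (hα z) (hβ z)) _) hc0 hz
    refine le_trans ?_ h1
    have h2 : (1 + t) ^ (K1 * K2) ≤ (α z * β z) ^ (K1 * K2) :=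
      pow_le_pow_left₀ (by linarith) hz1 _
    have h3 := one_add_mul_le_pow (by linarith : (-2 : ℝ) ≤ t) (K1 * K2)
    have h4 : 1 / (c0 * t) ≤ ((K1 * K2 : ℕ) : ℝ) := by push_cast; nlinarith
    rw [div_le_iff₀ (by positivity)] at h4
    have h5 := mul_le_mul_of_nonneg_left (h3.trans h2) hc0.le
    nlinarith
  · push Not at hcase
    have hmean : ∀ g : Z → ℝ, ∑ z, ρ z * g z = 1 → ∑ z, ρ z * (g z - 1) = 0 := by
      intro g hg
      simp [mul_sub, Finset.sum_sub_distrib, hg, hs]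
    have h1 := caseTwo hc0 hc1 K1 hK1 (s := fun z => α z - 1) (r := fun z => β z - 1) hρ hs
      (hmean α ha) (hmean β hb) (by
        intro z1 z2 h1 h2
        obtain ⟨z, a, b, c⟩ := hx z1 z2 h1 h2
        exact ⟨z, a, by simp [b], by simp [c]⟩)
      (fun z hz => by have := (hcase z hz).1; linarith)
      (fun z hz => by have := (hcase z hz).2; linarith)
    simp only [add_sub_cancel] at h1
    have h2 := Real.pow_arith_mean_le_arith_mean_pow Finset.univ ρ (fun z => (α z * β z) ^ K1)
      (fun z _ => hρ z) hs (fun z _ => pow_nonneg (mul_nonneg (hα z) (hβ z)) _) K2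
    simp only [← pow_mul] at h2
    exact (one_le_pow₀ h1).trans h2

lemma oneStep {c0 : ℝ} (hc0 : 0 < c0) : ∃ K : ℕ, 0 < K ∧
    ∀ (Z : Type) [Fintype Z] (ρ α β : Z → ℝ), (∀ z, 0 ≤ ρ z) → ∑ z, ρ z = 1 →
      (∀ z, 0 ≤ α z) → (∀ z, 0 ≤ β z) → Exch c0 ρ α β →
      ((∑ z, ρ z * α z) * ∑ z, ρ z * β z) ^ K ≤ ∑ z, ρ z * (α z * β z) ^ K := by
  obtain ⟨K, hK0, hK⟩ := oneStep1 (c0 := min c0 1) (by positivity) (min_le_right _ _)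
  refine ⟨K, hK0, ?_⟩
  intro Z _ ρ α β hρ hs hα hβ hx
  set a := ∑ z, ρ z * α z with ha
  set b := ∑ z, ρ z * β z with hb
  have ha0 : 0 ≤ a := Finset.sum_nonneg fun z _ => mul_nonneg (hρ z) (hα z)
  have hb0 : 0 ≤ b := Finset.sum_nonneg fun z _ => mul_nonneg (hρ z) (hβ z)
  have hR : 0 ≤ ∑ z, ρ z * (α z * β z) ^ K :=
    Finset.sum_nonneg fun z _ => mul_nonneg (hρ z) (pow_nonneg (mul_nonneg (hα z) (hβ z)) _)
  rcases ha0.eq_or_lt with h | ha1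
  · rw [← h]; simpa [hK0.ne'] using hR
  rcases hb0.eq_or_lt with h | hb1
  · rw [← h]; simpa [hK0.ne'] using hR
  have h1 := hK Z ρ (fun z => α z / a) (fun z => β z / b) hρ hs
    (fun z => div_nonneg (hα z) ha0) (fun z => div_nonneg (hβ z) hb0)
    (by
      intro z1 z2 h1 h2
      obtain ⟨z, a, b, c⟩ := hx z1 z2 h1 h2
      exact ⟨z, (min_le_left _ _).trans a, by simp [b], by simp [c]⟩)
    (by simp only [← mul_div_assoc, ← Finset.sum_div]; rw [← ha]; field_simp)
    (by simp only [← mul_div_assoc, ← Finset.sum_div]; rw [← hb]; field_simp)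
  have h2 : ∑ z, ρ z * (α z / a * (β z / b)) ^ K = (∑ z, ρ z * (α z * β z) ^ K) / (a * b) ^ K := by
    rw [Finset.sum_div]
    refine Finset.sum_congr rfl fun z _ => ?_
    rw [div_mul_div_comm, div_pow, mul_div_assoc]
  rw [h2, le_div_iff₀ (by positivity), one_mul] at h1
  exact h1


lemma rh2 {c0 : ℝ} (hc0 : 0 < c0) : ∃ K : ℕ, 0 < K ∧
    ∀ (Z Ω₁ Ω₂ : Type) [Fintype Z] (X₁ : Z → Ω₁) (X₂ : Z → Ω₂) (p : ℕ) (ρ : Fin p → Z → ℝ)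
      (A : (Fin p → Ω₁) → ℝ) (B : (Fin p → Ω₂) → ℝ), IsLaw ρ → (∀ x, 0 ≤ A x) → (∀ x, 0 ≤ B x) →
      (∀ k, Exch c0 (ρ k) X₁ X₂) →
      (Ex ρ (fun z => A (fun k => X₁ (z k))) * Ex ρ (fun z => B (fun k => X₂ (z k)))) ^ K ≤
        Ex ρ (fun z => (A (fun k => X₁ (z k)) * B (fun k => X₂ (z k))) ^ K) := by
  obtain ⟨K, hK0, hK⟩ := oneStep hc0
  refine ⟨K, hK0, ?_⟩
  intro Z Ω₁ Ω₂ _ X₁ X₂ p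
  induction p with
  | zero =>
    intro ρ A B hρ hA hB hx
    simp only [Ex_zero]; exact le_rfl
  | succ p ih =>
    intro ρ A B hρ hA hB hx
    have hc1 : ∀ (a : Z) (z : Fin p → Z), (fun k => X₁ ((Fin.cons a z : Fin (p+1) → Z) k)) =
        (Fin.cons (X₁ a) (fun k => X₁ (z k)) : Fin (p+1) → Ω₁) := by
      intro a z; funext k; refine Fin.cases ?_ (fun k => ?_) k <;> simp
    have hc2 : ∀ (a : Z) (z : Fin p → Z), (fun k => X₂ ((Fin.cons a z : Fin (p+1) → Z) k)) =
        (Fin.cons (X₂ a) (fun k => X₂ (z k)) : Fin (p+1) → Ω₂) := by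
      intro a z; funext k; refine Fin.cases ?_ (fun k => ?_) k <;> simp
    simp only [Ex_succ, hc1, hc2]
    have h1 := hK Z (ρ 0)
      (fun a => Ex (fun k => ρ k.succ) fun z => A (Fin.cons (X₁ a) fun k => X₁ (z k)))
      (fun a => Ex (fun k => ρ k.succ) fun z => B (Fin.cons (X₂ a) fun k => X₂ (z k)))
      (hρ.1 0) (hρ.2 0) (fun a => Ex_nonneg hρ.tail fun z => hA _)
      (fun a => Ex_nonneg hρ.tail fun z => hB _) (by
        intro z1 z2 h1 h2
        obtain ⟨z, a, b, c⟩ := hx 0 z1 z2 h1 h2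
        exact ⟨z, a, by simp only [b], by simp only [c]⟩)
    refine h1.trans (Finset.sum_le_sum fun a _ => mul_le_mul_of_nonneg_left ?_ (hρ.1 0 a))
    exact ih (fun k => ρ k.succ) (fun x => A (Fin.cons (X₁ a) x)) (fun x => B (Fin.cons (X₂ a) x))
      hρ.tail (fun x => hA _) (fun x => hB _) (fun k => hx k.succ)

lemma rhMulti {c0 η : ℝ} (hc0 : 0 < c0) (hη : 0 < η) : ∀ N : ℕ, ∃ κ' > (0 : ℝ),
    ∀ (ι Z Ω : Type) [DecidableEq ι] [Fintype Z] (p : ℕ) (ρ : Fin p → Z → ℝ) (E : Finset ι)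
      (X : ι → Z → Ω) (A : ι → (Fin p → Ω) → ℝ), IsLaw ρ → E.card = N →
      (∀ e x, 0 ≤ A e x) → (∀ e x, A e x ≤ 1) →
      (∀ k, ∀ e ∈ E, ∀ z1 z2, 0 < ρ k z1 → 0 < ρ k z2 →
        ∃ z, c0 ≤ ρ k z ∧ X e z = X e z1 ∧ ∀ e' ∈ E, e' ≠ e → X e' z = X e' z2) →
      (∀ e ∈ E, η ≤ Ex ρ (fun z => A e (fun k => X e (z k)))) →
      κ' ≤ Ex ρ (fun z => ∏ e ∈ E, A e (fun k => X e (z k))) := by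
  obtain ⟨K, hK0, hK⟩ := rh2 hc0
  intro N
  induction N with
  | zero =>
    refine ⟨1, one_pos, ?_⟩
    intro ι Z Ω _ _ p ρ E X A hρ hE hA0 hA1 hx hle
    rw [Finset.card_eq_zero] at hE
    subst hE
    simp [Ex_const hρ]
  | succ N ih =>
    obtain ⟨κ', hκ', ih⟩ := ih
    refine ⟨(η * κ') ^ K, by positivity, ?_⟩
    intro ι Z Ω _ _ p ρ E X A hρ hE hA0 hA1 hx hle
    obtain ⟨e, E', heE, rfl, hcard⟩ := Finset.card_eq_succ.1 hE
    have hB := ih ι Z Ω p ρ E' X A hρ hcard hA0 hA1 (by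
      intro k e1 he1 z1 z2 h1 h2
      obtain ⟨z, a, b, c⟩ := hx k e1 (Finset.mem_insert_of_mem he1) z1 z2 h1 h2
      exact ⟨z, a, b, fun e' he' => c e' (Finset.mem_insert_of_mem he')⟩)
      (fun e1 he1 => hle e1 (Finset.mem_insert_of_mem he1))
    have hAe := hle e (Finset.mem_insert_self _ _)
    have h1 := hK Z Ω (E' → Ω) (X e) (fun z e' => X e' z) p ρ (A e)
      (fun x => ∏ e' : E', A e' (fun k => x k e')) hρ (hA0 e)
      (fun x => Finset.prod_nonneg fun e' _ => hA0 _ _) (by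
        intro k z1 z2 h1 h2
        obtain ⟨z, a, b, c⟩ := hx k e (Finset.mem_insert_self _ _) z1 z2 h1 h2
        refine ⟨z, a, b, ?_⟩
        funext e'
        exact c e' (Finset.mem_insert_of_mem e'.2) (by rintro rfl; exact heE e'.2))
    have hprod : ∀ z : Fin p → Z, ∏ e' : E', A e' (fun k => X e' (z k)) =
        ∏ e' ∈ E', A e' (fun k => X e' (z k)) := by
      intro z
      exact Finset.prod_coe_sort E' (fun e' => A e' (fun k => X e' (z k)))
    simp only [hprod] at h1
    calc (η * κ') ^ K ≤ _ := pow_le_pow_left₀ (by positivity)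
          (mul_le_mul hAe hB hκ'.le (hη.le.trans hAe)) K
      _ ≤ _ := h1
      _ ≤ _ := by
        refine Ex_mono' hρ fun z => ?_
        rw [Finset.prod_insert heE]
        apply pow_le_of_le_one _ _ hK0.ne'
        · exact mul_nonneg (hA0 _ _) (Finset.prod_nonneg fun e' _ => hA0 _ _)
        · exact mul_le_one₀ (hA1 _ _) (Finset.prod_nonneg fun e' _ => hA0 _ _)
            (Finset.prod_le_one (fun e' _ => hA0 _ _) (fun e' _ => hA1 _ _))

lemma prod_ind {ι : Type*} (s : Finset ι) (P : ι → Prop) :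
    ∏ c ∈ s, ind (P c) = ind (∀ c ∈ s, P c) := by
  by_cases h : ∀ c ∈ s, P c
  · rw [ind_true h]; exact Finset.prod_eq_one fun c hc => ind_true (h c hc)
  · rw [ind_false h]
    push Not at h
    obtain ⟨c, hc, h⟩ := h
    exact Finset.prod_eq_zero hc (ind_false h)

lemma lev2 {n : ℕ} (hn : 0 < n) {c0 κ : ℝ} (hc0 : 0 < c0) (hκ : 0 < κ) : ∃ κ2 > (0 : ℝ),
    ∀ (Z : Type) [Fintype Z] (p : ℕ) (ρ : Fin p → Z → ℝ) (Y : Z → Fin n → Fin n)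
      (Q : Finset (Fin p)) (f : (Fin p → Fin n) → Fin n), IsLaw ρ →
      (∀ k c (g : Fin n → ℝ), ∑ z, ρ k z * g (Y z c) = ∑ a, 1 / (n : ℝ) * g a) →
      (∀ k, k ∉ Q → ∀ z, 0 < ρ k z → ∀ c c', Y z c = Y z c') →
      (∀ k, k ∈ Q → ∀ ω, ∃ z, c0 ≤ ρ k z ∧ Y z = ω) → κ ≤ V f Q →
      κ2 ≤ Ex ρ (fun z => ind (∀ c, f (fun k => Y (z k) c) ≠ c)) := by
  classical
  have hnR : (0 : ℝ) < n := by exact_mod_cast hn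
  set N : ℝ := (Fintype.card (Fin n → Fin n) : ℝ) with hN
  have hNpos : 0 < N := by
    have : Nonempty (Fin n → Fin n) := ⟨id⟩
    rw [hN]; exact_mod_cast Fintype.card_pos
  obtain ⟨κ', hκ', hmulti⟩ := rhMulti (c0 := min c0 (1 / N)) (η := κ / 4) (by positivity)
    (by positivity) n
  refine ⟨κ' * (κ / 2), by positivity, ?_⟩
  intro Z _ p ρ Y Q f hρ h1 h2 h3 hV
  have hu : IsLaw (un n (p := p)) := un_law hn
  set σ : Fin p → (Fin n → Fin n) → ℝ := fun k w => ∑ z, if Y z = w then ρ k z else 0 with hσ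
  have hσsum : ∀ k (g : (Fin n → Fin n) → ℝ), ∑ z, ρ k z * g (Y z) = ∑ w, σ k w * g w := by
    intro k g
    simp only [hσ, Finset.sum_mul]
    rw [Finset.sum_comm]
    refine Finset.sum_congr rfl fun x _ => ?_
    simp [ite_mul]
  set π : Fin p → (Fin n → Fin n) → ℝ := fun k w => if k ∈ Q then σ k w else 1 / N with hπ
  have hσ0 : ∀ k w, 0 ≤ σ k w := fun k w => Finset.sum_nonneg fun z _ => by
    split_ifs
    · exact hρ.1 k z
    · exact le_rfl
  have hπlaw : IsLaw π := by
    refine ⟨fun k w => ?_, fun k => ?_⟩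
    · simp only [hπ]; split_ifs
      · exact hσ0 k w
      · positivity
    · simp only [hπ]
      by_cases hk : k ∈ Q
      · simp only [hk, if_true]
        have := hσsum k (fun _ => 1)
        simp only [mul_one] at this
        rw [← this, hρ.2]
      · simp only [hk, if_false, Finset.sum_const, Finset.card_univ, nsmul_eq_mul]
        rw [← hN]; field_simp
  have hunif : ∀ c (g : Fin n → ℝ), ∑ w : Fin n → Fin n, 1 / N * g (w c) = ∑ a, 1 / (n : ℝ) * g a := by
    intro c g
    apply marg hn (fun _ => 1 / N) _ (fun _ _ => rfl)
    simp only [Finset.sum_const, Finset.card_univ, nsmul_eq_mul]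
    rw [← hN]; field_simp
  have hπmarg : ∀ c k (g : Fin n → ℝ), ∑ w, π k w * g (w c) = ∑ a, 1 / (n : ℝ) * g a := by
    intro c k g
    simp only [hπ]
    by_cases hk : k ∈ Q
    · simp only [hk, if_true]
      rw [← hσsum k (fun w => g (w c)), h1]
    · simp only [hk, if_false]; exact hunif c g
  have e1 : Ex ρ (fun z => ind (∀ c, f (fun k => Y (z k) c) ≠ c)) =
      Ex σ (fun w => ind (∀ c, f (fun k => w k c) ≠ c)) :=
    Ex_map (fun _ z => Y z) hσsum (fun w => ind (∀ c, f (fun k => w k c) ≠ c))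
  have e2 : Ex (fun k (w : (Fin n → Fin n) × Fin n) => π k w.1 * un n k w.2)
      (fun w => ind (∀ c, f (fun k => (if k ∈ Q then (w k).1 else fun _ => (w k).2) c) ≠ c)) =
      Ex σ (fun w => ind (∀ c, f (fun k => w k c) ≠ c)) := by
    refine Ex_map (fun k (w : (Fin n → Fin n) × Fin n) => if k ∈ Q then w.1 else fun _ => w.2) ?_
      (fun w => ind (∀ c, f (fun k => w k c) ≠ c))
    intro k g
    rw [Fintype.sum_prod_type]
    by_cases hk : k ∈ Q
    · simp only [hk, if_true, hπ, un]
      refine Finset.sum_congr rfl fun w _ => ?_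
      simp only [Finset.sum_const, Finset.card_univ, nsmul_eq_mul, Fintype.card_fin]
      field_simp
    · simp only [hk, if_false, hπ, un]
      simp only [Finset.sum_const, Finset.card_univ, nsmul_eq_mul, ← hN]
      rw [← hσsum]
      have c0' : Fin n := ⟨0, hn⟩
      have : ∑ z, ρ k z * g (Y z) = ∑ z, ρ k z * g (fun _ => Y z c0') := by
        refine Finset.sum_congr rfl fun z _ => ?_
        rcases (hρ.1 k z).eq_or_lt with h | h
        · rw [← h]; simp
        · congr 2; funext c; exact h2 k hk z h c c0'
      rw [this, h1 k c0' (fun a => g (fun _ => a)), Finset.mul_sum]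
      refine Finset.sum_congr rfl fun a _ => ?_
      field_simp
  have hmixeq : ∀ (z : Fin p → Fin n → Fin n) (y : Fin p → Fin n) (c : Fin n),
      (fun k => (if k ∈ Q then z k else fun _ => y k) c) = mix Q (fun k => z k c) y := by
    intro z y c; funext k; simp only [mix]; split_ifs <;> rfl
  rw [e1, ← e2, Ex_prod, Ex_comm]
  simp only [hmixeq]
  set q : (Fin p → Fin n) → Fin n → ℝ := fun a c => Ex (un n) (fun y => ind (f (mix Q y a) ≠ c)) with hq
  set good : (Fin p → Fin n) → Prop := fun a => ∀ c, κ / 4 ≤ q a c with hgood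
  have hg1 : ∀ a, κ' * ind (good a) ≤
      Ex π (fun z => ind (∀ c, f (mix Q (fun k => z k c) a) ≠ c)) := by
    intro a
    by_cases ha : good a
    · rw [ind_true ha, mul_one]
      have := hmulti (Fin n) (Fin n → Fin n) (Fin n) p π Finset.univ (fun c w => w c)
        (fun c x => ind (f (mix Q x a) ≠ c)) hπlaw (by simp) (fun _ _ => ind_nonneg _)
        (fun _ _ => ind_le_one _) (by
          intro k e _ w1 w2 _ _
          refine ⟨Function.update w2 e (w1 e), ?_, by simp, fun e' _ he' => by simp [he']⟩
          simp only [hπ]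
          by_cases hk : k ∈ Q
          · simp only [hk, if_true]
            obtain ⟨z, hz, hz'⟩ := h3 k hk (Function.update w2 e (w1 e))
            refine (min_le_left _ _).trans (hz.trans ?_)
            simp only [hσ]
            refine le_trans ?_ (Finset.single_le_sum
              (f := fun z => if Y z = (Function.update w2 e (w1 e)) then ρ k z else 0)
              (fun z _ => ?_) (Finset.mem_univ z))
            · simp [hz']
            · split_ifs
              · exact hρ.1 k z
              · exact le_rfl
          · simp only [hk, if_false]; exact min_le_right _ _)
        (by
          intro c _
          rw [Ex_map (fun _ (w : Fin n → Fin n) => w c) (σ := un n) (fun k g => hπmarg c k g)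
            (fun x => ind (f (mix Q x a) ≠ c))]
          exact ha c)
      simpa [prod_ind] using this
    · rw [ind_false ha, mul_zero]
      exact Ex_nonneg hπlaw fun _ => ind_nonneg _
  have hg2 : κ / 2 ≤ Ex (un n) (fun a => ind (good a)) := by
    have : V f Q ≤ Ex (un n) (fun a => ind (good a) + κ / 2) := by
      rw [V_three hn]
      refine Ex_mono' hu fun a => ?_
      by_cases ha : good a
      · rw [ind_true ha]
        have : (Ex (un n) fun x => Ex (un n) fun b => ind (f (mix Q x a) ≠ f (mix Q b a))) ≤ 1 :=
          Ex_le_one hu fun x => Ex_le_one hu fun b => ind_le_one _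
        linarith
      · rw [ind_false ha]
        simp only [hgood] at ha
        push Not at ha
        obtain ⟨c, hc⟩ := ha
        have : (Ex (un n) fun x => Ex (un n) fun b => ind (f (mix Q x a) ≠ f (mix Q b a))) ≤
            Ex (un n) fun x => Ex (un n) fun b => ind (f (mix Q x a) ≠ c) + ind (f (mix Q b a) ≠ c) := by
          refine Ex_mono' hu fun x => Ex_mono' hu fun b => ind_le_add fun h => ?_
          by_contra h'
          push Not at h'
          exact h (h'.1.trans h'.2.symm)
        simp only [Ex_add, Ex_const hu] at this
        simp only [hq] at hc
        linarith
    rw [Ex_add, Ex_const hu] at this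
    linarith
  calc κ' * (κ / 2) ≤ κ' * Ex (un n) (fun a => ind (good a)) :=
        mul_le_mul_of_nonneg_left hg2 hκ'.le
    _ = Ex (un n) (fun a => κ' * ind (good a)) := (Ex_cmul _ _ _).symm
    _ ≤ _ := Ex_mono' hu hg1


def ag {m n : ℕ} (S : Finset (Fin m)) (v u : Fin m → Fin n) : Prop := ∀ j ∈ S, v j = u j

lemma ag.symm {m n : ℕ} {S : Finset (Fin m)} {v u : Fin m → Fin n} (h : ag S v u) : ag S u v :=
  fun j hj => (h j hj).symm

lemma ag.trans {m n : ℕ} {S : Finset (Fin m)} {v u w : Fin m → Fin n} (h : ag S v u)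
    (h' : ag S u w) : ag S v w := fun j hj => (h j hj).trans (h' j hj)

noncomputable def Mg {m n : ℕ} (μ : (Fin m → Fin n) → ℝ) (S : Finset (Fin m))
    (v : Fin m → Fin n) : ℝ := ∑ u, ind (ag S v u) * μ u

noncomputable def cnd {m n : ℕ} (μ : (Fin m → Fin n) → ℝ) (S : Finset (Fin m))
    (v u : Fin m → Fin n) : ℝ := ind (ag S v u) * μ u / Mg μ S v

noncomputable def star' {m n : ℕ} (μ : (Fin m → Fin n) → ℝ) (S : Finset (Fin m))
    (z : (Fin m → Fin n) × (Fin n → Fin m → Fin n)) : ℝ := μ z.1 * ∏ c, cnd μ S z.1 (z.2 c)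

section star
variable {m n : ℕ} {μ : (Fin m → Fin n) → ℝ} (S : Finset (Fin m))

lemma Mg_pos (h0 : ∀ x, 0 ≤ μ x) {v : Fin m → Fin n} (hv : 0 < μ v) : 0 < Mg μ S v := by
  have h1 : ind (ag S v v) * μ v ≤ Mg μ S v := Finset.single_le_sum
    (f := fun u => ind (ag S v u) * μ u) (fun u _ => mul_nonneg (ind_nonneg _) (h0 u)) (Finset.mem_univ v)
  rw [ind_true (show ag S v v from fun j _ => rfl), one_mul] at h1
  linarith

lemma Mg_nonneg (h0 : ∀ x, 0 ≤ μ x) (v : Fin m → Fin n) : 0 ≤ Mg μ S v :=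
  Finset.sum_nonneg fun u _ => mul_nonneg (ind_nonneg _) (h0 u)

lemma Mg_le_one (h0 : ∀ x, 0 ≤ μ x) (hs : ∑ x, μ x = 1) (v : Fin m → Fin n) : Mg μ S v ≤ 1 := by
  rw [← hs]
  exact Finset.sum_le_sum fun u _ => by nlinarith [ind_le_one (ag S v u), h0 u]

lemma cnd_nonneg (h0 : ∀ x, 0 ≤ μ x) (v u : Fin m → Fin n) : 0 ≤ cnd μ S v u :=
  div_nonneg (mul_nonneg (ind_nonneg _) (h0 u)) (Mg_nonneg S h0 v)

lemma cnd_law (h0 : ∀ x, 0 ≤ μ x) {v : Fin m → Fin n} (hv : 0 < μ v) :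
    IsLaw (fun _ : Fin n => cnd μ S v) := by
  refine ⟨fun _ u => cnd_nonneg S h0 v u, fun _ => ?_⟩
  unfold cnd
  rw [← Finset.sum_div]
  exact div_self (Mg_pos S h0 hv).ne'

lemma Mg_congr {v u : Fin m → Fin n} (h : ag S v u) : Mg μ S v = Mg μ S u := by
  unfold Mg
  refine Finset.sum_congr rfl fun w _ => ?_
  have : ag S v w ↔ ag S u w := ⟨fun h' => h.symm.trans h', fun h' => h.trans h'⟩
  rw [this]

lemma sstar_sum (G : (Fin m → Fin n) × (Fin n → Fin m → Fin n) → ℝ) :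
    ∑ z, star' μ S z * G z = ∑ v, μ v * Ex (fun _ => cnd μ S v) (fun y => G (v, y)) := by
  rw [Fintype.sum_prod_type]
  refine Finset.sum_congr rfl fun v _ => ?_
  unfold Ex star'
  rw [Finset.mul_sum]
  refine Finset.sum_congr rfl fun y _ => ?_
  simp only [mul_assoc]

lemma sstar_nonneg (h0 : ∀ x, 0 ≤ μ x) (z) : 0 ≤ star' μ S z :=
  mul_nonneg (h0 _) (Finset.prod_nonneg fun c _ => cnd_nonneg S h0 _ _)

lemma sstar_one (h0 : ∀ x, 0 ≤ μ x) (hs : ∑ x, μ x = 1) : ∑ z, star' μ S z = 1 := by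
  have := sstar_sum (μ := μ) S (fun _ => 1)
  simp only [mul_one] at this
  rw [this]; refine Eq.trans ?_ hs
  refine Finset.sum_congr rfl fun v _ => ?_
  rcases (h0 v).eq_or_lt with h | h
  · rw [← h]; simp
  · rw [Ex_const (cnd_law S h0 h), mul_one]

lemma sstar_proj (h0 : ∀ x, 0 ≤ μ x) (c : Fin n) (g : (Fin m → Fin n) → ℝ) :
    ∑ z, star' μ S z * g (z.2 c) = ∑ u, μ u * g u := by
  rw [sstar_sum S (fun z => g (z.2 c))]
  have h1 : ∀ v, μ v * Ex (fun _ => cnd μ S v) (fun y => g (y c)) =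
      ∑ u, μ u * g u * (ind (ag S u v) * μ v / Mg μ S u) := by
    intro v
    rcases (h0 v).eq_or_lt with h | h
    · rw [← h]; simp
    · rw [Ex_single (cnd_law S h0 h) c g, Finset.mul_sum]
      refine Finset.sum_congr rfl fun u _ => ?_
      unfold cnd
      by_cases ha : ag S v u
      · rw [ind_true ha, ind_true ha.symm, Mg_congr S ha]; ring
      · rw [ind_false ha, ind_false (fun h => ha h.symm)]; ring
  simp only [h1]
  rw [Finset.sum_comm]
  refine Finset.sum_congr rfl fun u _ => ?_
  rw [← Finset.mul_sum, ← Finset.sum_div]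
  rcases (h0 u).eq_or_lt with h | h
  · rw [← h]; simp
  · change μ u * g u * (Mg μ S u / Mg μ S u) = _
    rw [div_self (Mg_pos S h0 h).ne', mul_one]

lemma sstar_supp (h0 : ∀ x, 0 ≤ μ x) {z} (hz : 0 < star' μ S z) :
    ∀ c, ag S z.1 (z.2 c) ∧ 0 < μ (z.2 c) := by
  intro c
  have h1 : cnd μ S z.1 (z.2 c) ≠ 0 := by
    intro h
    have : ∏ c, cnd μ S z.1 (z.2 c) = 0 := Finset.prod_eq_zero (Finset.mem_univ c) h
    unfold star' at hz
    rw [this, mul_zero] at hz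
    exact lt_irrefl _ hz
  constructor
  · by_contra h
    apply h1
    unfold cnd
    rw [ind_false h]; simp
  · refine lt_of_le_of_ne (h0 _) fun h => h1 ?_
    unfold cnd
    rw [← h]; simp

lemma sstar_ge (h0 : ∀ x, 0 ≤ μ x) (hs : ∑ x, μ x = 1) {β : ℝ} (hβ : 0 < β)
    (hβμ : ∀ x, Function.Surjective x → β ≤ μ x) (v : Fin m → Fin n) (y : Fin n → Fin m → Fin n)
    (hv : Function.Surjective v) (hy : ∀ c, Function.Surjective (y c)) (ha : ∀ c, ag S v (y c)) :
    β ^ (n + 1) ≤ star' μ S (v, y) := by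
  unfold star'
  have h1 : ∀ c, β ≤ cnd μ S v (y c) := by
    intro c
    unfold cnd
    rw [ind_true (ha c), one_mul]
    have h2 := hβμ _ (hy c)
    rw [le_div_iff₀ (Mg_pos S h0 (hβ.trans_le (hβμ v hv)))]
    nlinarith [Mg_le_one S h0 hs v]
  have h2 : β ^ n ≤ ∏ c, cnd μ S v (y c) := by
    calc β ^ n = ∏ c : Fin n, β := by simp
      _ ≤ _ := Finset.prod_le_prod (fun _ _ => hβ.le) fun c _ => h1 c
  rw [pow_succ, mul_comm]
  exact mul_le_mul (hβμ v hv) h2 (by positivity) (h0 _)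

end star

lemma exists_cover {m n : ℕ} (hn : 0 < n) (J : Finset (Fin m)) (T : Finset (Fin n))
    (h : T.card ≤ J.card) : ∃ g : Fin m → Fin n, ∀ b ∈ T, ∃ j ∈ J, g j = b := by
  obtain ⟨e⟩ := Function.Embedding.nonempty_of_card_le (α := T) (β := J) (by simpa using h)
  refine ⟨Function.extend (fun t : T => (e t : Fin m)) (fun t => t.1) (fun _ => ⟨0, hn⟩), ?_⟩
  intro b hb
  refine ⟨e ⟨b, hb⟩, (e _).2, ?_⟩
  have hinj : Function.Injective (fun t : T => (e t : Fin m)) := fun a b h =>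
    e.injective (Subtype.ext h)
  exact hinj.extend_apply _ _ ⟨b, hb⟩

theorem key_gt (m n : ℕ) (hnm : n < m) (hn : 2 ≤ n)
    (μ : (Fin m → Fin n) → ℝ)
    (hnonneg : ∀ x, 0 ≤ μ x)
    (hsum : ∑ x : Fin m → Fin n, μ x = 1)
    (hsupp : ∀ x : Fin m → Fin n, 0 < μ x ↔ Function.Surjective x)
    (hinv : ∀ π : Equiv.Perm (Fin n), ∀ x : Fin m → Fin n,
      μ (fun i => π (x i)) = μ x) : KeyClaim m n μ := by
  classical
  have hn0 : 0 < n := by omega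
  obtain ⟨β, hβ, hβμ⟩ := exists_beta μ hsupp
  intro ε κ hε hκ
  set κ1 := min κ ε
  have hκ1 : 0 < κ1 := by positivity
  set c0 := β ^ (n + 1)
  have hc0 : 0 < c0 := by positivity
  obtain ⟨κ2, hκ2, hlev⟩ := lev2 hn0 hc0 hκ1
  obtain ⟨κ3, hκ3, hmul⟩ := rhMulti hc0 hκ2 (m - (n - 1))
  have hnR : (0 : ℝ) < n := by exact_mod_cast hn0
  refine ⟨κ3 / (2 * n), by positivity, ?_⟩
  intro p f hpoly hV R i l hil
  by_contra hcon
  push Not at hcon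
  obtain ⟨hVl, hVi⟩ := hcon
  obtain ⟨J, hJsub, hJcard⟩ : ∃ J ⊆ ({i, l} : Finset (Fin m))ᶜ, J.card = n - 1 := by
    apply Finset.exists_subset_card_eq
    rw [Finset.card_compl, Finset.card_pair hil, Fintype.card_fin]; omega
  have hiJ : i ∉ J := fun h => by have := hJsub h; simp at this
  have hlJ : l ∉ J := fun h => by have := hJsub h; simp at this
  set ek : Fin p → Fin m := fun k => if k ∈ R then i else l with hek
  have hekJ : ∀ k, ek k ∉ J := by intro k; simp only [hek]; split_ifs <;> assumption
  set S : Fin p → Finset (Fin m) := fun k => insert (ek k) J with hS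
  have hScard : ∀ k, (S k).card = n := by
    intro k; rw [hS, Finset.card_insert_of_notMem (hekJ k), hJcard]; omega
  set ρ : Fin p → ((Fin m → Fin n) × (Fin n → Fin m → Fin n)) → ℝ := fun k => star' μ (S k) with hρdef
  have hρ : IsLaw ρ := ⟨fun k => sstar_nonneg _ hnonneg, fun k => sstar_one _ hnonneg hsum⟩
  have hagree : ∀ k z, 0 < ρ k z → ∀ e ∈ S k, ∀ c, z.2 c e = z.1 e := by
    intro k z hz e he c
    exact ((sstar_supp (S k) hnonneg hz c).1 e he).symm
  have step : ∀ e ∈ Jᶜ, κ2 ≤ Ex ρ (fun z => ind (∀ c, f e (fun k => (z k).2 c e) ≠ c)) := by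
    intro e he
    rw [Finset.mem_compl] at he
    refine hlev _ p ρ (fun z c => z.2 c e) (Finset.univ.filter fun k => e ≠ ek k) (f e) hρ ?_ ?_ ?_ ?_
    · intro k c g
      have := sstar_proj (S k) hnonneg c (fun u => g (u e))
      rw [marg hn0 μ hsum hinv e g] at this
      exact this
    · intro k hk z hz c c'
      simp only [Finset.mem_filter, Finset.mem_univ, true_and, not_not] at hk
      have heS : e ∈ S k := by rw [hk]; exact Finset.mem_insert_self _ _
      simp only [hagree k z hz e heS]
    · intro k hk ω
      simp only [Finset.mem_filter, Finset.mem_univ, true_and] at hk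
      have heS : e ∉ S k := by
        simp only [hS, Finset.mem_insert, not_or]; exact ⟨hk, he⟩
      obtain ⟨w, hw⟩ := exists_cover hn0 (S k) Finset.univ (by simp [hScard])
      refine ⟨(w, fun c => Function.update w e (ω c)), ?_, by funext c; simp⟩
      apply sstar_ge (S k) hnonneg hsum hβ hβμ
      · intro b; obtain ⟨j, _, hj⟩ := hw b (Finset.mem_univ _); exact ⟨j, hj⟩
      · intro c b
        obtain ⟨j, hj1, hj⟩ := hw b (Finset.mem_univ _)
        refine ⟨j, ?_⟩
        rw [Function.update_of_ne (by rintro rfl; exact heS hj1)]; exact hj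
      · intro c j hj
        rw [Function.update_of_ne (by rintro rfl; exact heS hj)]
    · by_cases h1 : e = i
      · subst h1
        have : (Finset.univ.filter fun k => e ≠ ek k) = Rᶜ := by
          ext k; simp only [hek, Finset.mem_filter, Finset.mem_univ, true_and, Finset.mem_compl]
          split_ifs with h <;> simp [h, hil]
        rw [this]; exact (min_le_left _ _).trans hVi.le
      by_cases h2 : e = l
      · subst h2
        have : (Finset.univ.filter fun k => e ≠ ek k) = R := by
          ext k; simp only [hek, Finset.mem_filter, Finset.mem_univ, true_and]
          split_ifs with h <;> simp [h, h1]
        rw [this]; exact (min_le_left _ _).trans hVl.le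
      · have : (Finset.univ.filter fun k => e ≠ ek k) = Finset.univ := by
          ext k; simp only [hek, Finset.mem_filter, Finset.mem_univ, true_and]
          split_ifs with h <;> simp [h1, h2]
        rw [this]; exact (min_le_right _ _).trans (hV e).le
  have big := hmul (Fin m) _ (Fin n → Fin n) p ρ Jᶜ (fun e z c => z.2 c e)
    (fun e x => ind (∀ c, f e (fun k => x k c) ≠ c)) hρ
    (by rw [Finset.card_compl, Fintype.card_fin, hJcard]) (fun _ _ => ind_nonneg _)
    (fun _ _ => ind_le_one _) (by
      intro k e he z1 z2 hz1 hz2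
      rw [Finset.mem_compl] at he
      have hekS : ek k ∈ S k := Finset.mem_insert_self _ _
      set pre : Fin n → Fin m → Fin n := fun c j => if j = e then z1.2 c j else z2.2 c j with hpre
      obtain ⟨a, ha⟩ : ∃ a, ∀ c, pre c (ek k) = a := by
        by_cases h : ek k = e
        · exact ⟨z1.1 (ek k), fun c => by simp only [hpre, h, if_true]; rw [← h]; exact hagree k z1 hz1 _ hekS c⟩
        · exact ⟨z2.1 (ek k), fun c => by simp only [hpre, h, if_false]; exact hagree k z2 hz2 _ hekS c⟩
      obtain ⟨g, hg⟩ := exists_cover hn0 J (Finset.univ.erase a) (by simp [hJcard])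
      set y : Fin n → Fin m → Fin n := fun c j => if j ∈ J then g j else pre c j with hy
      have hysurj : ∀ c, Function.Surjective (y c) := by
        intro c b
        by_cases hb : b = a
        · refine ⟨ek k, ?_⟩; simp only [hy, hekJ k, if_false]; rw [ha, hb]
        · obtain ⟨j, hj, hj'⟩ := hg b (by simp [hb])
          exact ⟨j, by simp [hy, hj, hj']⟩
      have hyag : ∀ c c', ag (S k) (y c) (y c') := by
        intro c c' j hj
        rcases Finset.mem_insert.1 hj with rfl | hj
        · simp only [hy, hekJ k, if_false]; rw [ha, ha]
        · simp [hy, hj]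
      refine ⟨(y ⟨0, hn0⟩, y), sstar_ge (S k) hnonneg hsum hβ hβμ _ _ (hysurj _) hysurj (hyag _), ?_, ?_⟩
      · funext c; simp [hy, he, hpre]
      · intro e' he' hne
        rw [Finset.mem_compl] at he'
        funext c; simp [hy, he', hpre, hne])
    step
  have upper : Ex ρ (fun z => ∏ e ∈ Jᶜ, ind (∀ c, f e (fun k => (z k).2 c e) ≠ c)) ≤
      Ex ρ (fun z => ∑ c : Fin n, ind (¬ Function.Surjective (fun e => f e (fun k => (z k).2 c e)))) := by
    refine Ex_mono hρ fun z hz => ?_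
    rw [prod_ind]
    have hnn : 0 ≤ ∑ c : Fin n, ind (¬ Function.Surjective (fun e => f e (fun k => (z k).2 c e))) :=
      Finset.sum_nonneg fun _ _ => ind_nonneg _
    by_cases hev : ∀ e ∈ Jᶜ, ∀ c, f e (fun k => (z k).2 c e) ≠ c
    · rw [ind_true hev]
      obtain ⟨c, hc⟩ : ∃ c, c ∉ J.image (fun j => f j (fun k => (z k).1 j)) := by
        by_contra h
        push Not at h
        have h1 : (Finset.univ : Finset (Fin n)) ⊆ J.image (fun j => f j (fun k => (z k).1 j)) :=
          fun c _ => h c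
        have h2 := Finset.card_le_card h1
        have h3 := Finset.card_image_le (s := J) (f := fun j => f j (fun k => (z k).1 j))
        simp at h2; omega
      have hns : ¬ Function.Surjective (fun e => f e (fun k => (z k).2 c e)) := by
        intro hs
        obtain ⟨e, he⟩ := hs c
        by_cases heJ : e ∈ J
        · apply hc
          rw [Finset.mem_image]
          refine ⟨e, heJ, ?_⟩
          rw [← he]
          congr 1; funext k
          exact (hagree k (z k) (hz k) e (Finset.mem_insert_of_mem heJ) c).symm
        · exact hev e (Finset.mem_compl.2 heJ) c he
      have := Finset.single_le_sum
        (f := fun c => ind (¬ Function.Surjective (fun e => f e (fun k => (z k).2 c e))))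
        (fun _ _ => ind_nonneg _) (Finset.mem_univ c)
      simp only [ind_true hns] at this
      exact this
    · rw [ind_false hev]; exact hnn
  rw [Ex_sum] at upper
  have h4 : ∀ c : Fin n, Ex ρ (fun z => ind (¬ Function.Surjective (fun e => f e (fun k => (z k).2 c e))))
      ≤ κ3 / (2 * n) := by
    intro c
    rw [Ex_map (fun _ (z : (Fin m → Fin n) × (Fin n → Fin m → Fin n)) => z.2 c) (σ := fun _ => μ)
      (fun k g => sstar_proj (S k) hnonneg c g)
      (fun x => ind (¬ Function.Surjective (fun e => f e (fun k => x k e))))]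
    exact hpoly
  have h5 : ∑ c : Fin n, Ex ρ (fun z => ind (¬ Function.Surjective (fun e => f e (fun k => (z k).2 c e))))
      ≤ ∑ c : Fin n, κ3 / (2 * n) := Finset.sum_le_sum fun c _ => h4 c
  simp only [Finset.sum_const, Finset.card_univ, nsmul_eq_mul, Fintype.card_fin] at h5
  have h6 : (n : ℝ) * (κ3 / (2 * n)) = κ3 / 2 := by field_simp
  rw [h6] at h5
  linarith [big.trans upper]


noncomputable def dl (n : ℕ) {p : ℕ} : Fin p → Fin n × Fin n → ℝ :=
  fun _ w => ind (w.1 ≠ w.2) * (1 / ((n : ℝ) * (n - 1)))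

lemma dl_sum {n : ℕ} (φ : Fin n → Fin n → ℝ) :
    ∑ w : Fin n × Fin n, ind (w.1 ≠ w.2) * (1 / ((n : ℝ) * (n - 1))) * φ w.1 w.2 =
      1 / ((n : ℝ) * (n - 1)) * (∑ a, ∑ b, φ a b - ∑ a, φ a a) := by
  rw [Fintype.sum_prod_type, ← Finset.sum_sub_distrib, Finset.mul_sum]
  refine Finset.sum_congr rfl fun a _ => ?_
  have h : ∑ b, φ a b - φ a a = ∑ b, ind (a ≠ b) * φ a b := by
    simp only [ne_eq, ind_not, sub_mul, one_mul, Finset.sum_sub_distrib]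
    congr 1
    simp [ind]
  rw [h, Finset.mul_sum]
  refine Finset.sum_congr rfl fun b _ => ?_
  ring

lemma dl_marg1 {n : ℕ} (hn : 3 ≤ n) {p : ℕ} (k : Fin p) (φ : Fin n → ℝ) :
    ∑ w : Fin n × Fin n, dl n k w * φ w.1 = ∑ a, 1 / (n : ℝ) * φ a := by
  have h3 : (3 : ℝ) ≤ n := by exact_mod_cast hn
  have h1 : (n : ℝ) - 1 ≠ 0 := by linarith
  have h0 : (n : ℝ) ≠ 0 := by linarith
  unfold dl
  rw [dl_sum (fun a _ => φ a)]
  simp only [Finset.sum_const, Finset.card_univ, nsmul_eq_mul, Fintype.card_fin, ← Finset.mul_sum]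
  field_simp

lemma dl_marg2 {n : ℕ} (hn : 3 ≤ n) {p : ℕ} (k : Fin p) (φ : Fin n → ℝ) :
    ∑ w : Fin n × Fin n, dl n k w * φ w.2 = ∑ a, 1 / (n : ℝ) * φ a := by
  have h3 : (3 : ℝ) ≤ n := by exact_mod_cast hn
  have h1 : (n : ℝ) - 1 ≠ 0 := by linarith
  have h0 : (n : ℝ) ≠ 0 := by linarith
  unfold dl
  rw [dl_sum (fun _ b => φ b)]
  simp only [Finset.sum_const, Finset.card_univ, nsmul_eq_mul, Fintype.card_fin, ← Finset.mul_sum]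
  field_simp

lemma dl_law {n : ℕ} (hn : 3 ≤ n) {p : ℕ} : IsLaw (dl n (p := p)) := by
  have h3 : (3 : ℝ) ≤ n := by exact_mod_cast hn
  refine ⟨fun k w => ?_, fun k => ?_⟩
  · unfold dl
    apply mul_nonneg (ind_nonneg _)
    apply div_nonneg zero_le_one
    apply mul_nonneg <;> linarith
  · have := dl_marg1 hn k (fun _ => 1)
    simp only [mul_one] at this
    rw [this]
    exact (un_law (p := 1) (by omega : 0 < n)).2 0

lemma gap1 {n : ℕ} (hn : 3 ≤ n) {p : ℕ} (k : Fin p) (g h : Fin n → ℝ) :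
    ((∑ a, 1 / (n : ℝ) * g a) - ∑ a, 1 / (n : ℝ) * h a) ^ 2 +
      1 / 2 * ((∑ a, 1 / (n : ℝ) * g a ^ 2 - (∑ a, 1 / (n : ℝ) * g a) ^ 2) +
        (∑ a, 1 / (n : ℝ) * h a ^ 2 - (∑ a, 1 / (n : ℝ) * h a) ^ 2)) ≤
      ∑ w : Fin n × Fin n, dl n k w * (g w.1 - h w.2) ^ 2 := by
  have h3 : (3 : ℝ) ≤ n := by exact_mod_cast hn
  unfold dl
  rw [dl_sum (fun a b => (g a - h b) ^ 2)]
  set N : ℝ := (n : ℝ) with hN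
  have hN0 : 0 < N := by linarith
  simp only [← Finset.mul_sum]
  set Sg := ∑ a, g a
  set Sh := ∑ a, h a
  set Qg := ∑ a, g a ^ 2
  set Qh := ∑ a, h a ^ 2
  set P := ∑ a, g a * h a
  have e1 : ∑ a, ∑ b, (g a - h b) ^ 2 = N * Qg + N * Qh - 2 * Sg * Sh := by
    have : ∀ a b, (g a - h b) ^ 2 = g a ^ 2 - 2 * g a * h b + h b ^ 2 := by intros; ring
    simp only [this, Finset.sum_add_distrib, Finset.sum_sub_distrib, ← Finset.mul_sum,
      ← Finset.sum_mul, Finset.sum_const, Finset.card_univ, nsmul_eq_mul, Fintype.card_fin]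
    simp only [Qg, Qh, Sg, Sh]; ring
  have e2 : ∑ a, (g a - h a) ^ 2 = Qg + Qh - 2 * P := by
    simp only [Qg, Qh, P, Finset.mul_sum, ← Finset.sum_add_distrib, ← Finset.sum_sub_distrib]
    exact Finset.sum_congr rfl fun a _ => by ring
  have cs : ∀ φ : Fin n → ℝ, (∑ a, φ a) ^ 2 ≤ N * ∑ a, φ a ^ 2 := by
    intro φ
    have := sq_sum_le_card_mul_sum_sq (s := Finset.univ) (f := φ)
    simpa using this
  have c1 : Sg ^ 2 ≤ N * Qg := cs g
  have c2 : Sh ^ 2 ≤ N * Qh := cs h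
  have c3 : (Sg + Sh) ^ 2 ≤ N * (Qg + 2 * P + Qh) := by
    have := cs (fun a => g a + h a)
    have e3 : ∑ a, (g a + h a) ^ 2 = Qg + 2 * P + Qh := by
      simp only [Qg, Qh, P, Finset.mul_sum, ← Finset.sum_add_distrib]
      exact Finset.sum_congr rfl fun a _ => by ring
    rw [e3, Finset.sum_add_distrib] at this
    exact this
  rw [e1, e2, ← sub_nonneg]
  have hN1 : 0 < N - 1 := by linarith
  have key : 1 / (N * (N - 1)) * (N * Qg + N * Qh - 2 * Sg * Sh - (Qg + Qh - 2 * P)) -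
      ((1 / N * Sg - 1 / N * Sh) ^ 2 + 1 / 2 * (1 / N * Qg - (1 / N * Sg) ^ 2 + (1 / N * Qh - (1 / N * Sh) ^ 2)))
      = ((N * (Qg + 2 * P + Qh) - (Sg + Sh) ^ 2) +
        ((N - 3) / 2) * ((N * Qg - Sg ^ 2) + (N * Qh - Sh ^ 2))) / (N ^ 2 * (N - 1)) := by
    field_simp
    ring
  rw [key]
  apply div_nonneg _ (by positivity)
  have : 0 ≤ ((N - 3) / 2) * ((N * Qg - Sg ^ 2) + (N * Qh - Sh ^ 2)) := by
    apply mul_nonneg <;> linarith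
  linarith

lemma gap {n : ℕ} (hn : 3 ≤ n) {p : ℕ} (G H : (Fin p → Fin n) → ℝ) :
    (Ex (un n) G - Ex (un n) H) ^ 2 +
      1 / 2 * ((Ex (un n) (fun x => G x ^ 2) - Ex (un n) G ^ 2) +
        (Ex (un n) (fun x => H x ^ 2) - Ex (un n) H ^ 2)) ≤
      Ex (dl n) (fun w => (G (fun k => (w k).1) - H (fun k => (w k).2)) ^ 2) := by
  induction p with
  | zero =>
    simp only [Ex_zero]
    have : ∀ (x y : Fin 0 → Fin n), x = y := fun x y => Subsingleton.elim _ _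
    rw [this (fun k => ((Fin.elim0 k : Fin n × Fin n)).1) Fin.elim0,
      this (fun k => ((Fin.elim0 k : Fin n × Fin n)).2) Fin.elim0]
    linarith
  | succ p ih =>
    have hc1 : ∀ (a : Fin n × Fin n) (z : Fin p → Fin n × Fin n),
        (fun k => ((Fin.cons a z : Fin (p+1) → Fin n × Fin n) k).1) =
        (Fin.cons a.1 (fun k => (z k).1) : Fin (p+1) → Fin n) := by
      intro a z; funext k; refine Fin.cases ?_ (fun k => ?_) k <;> simp
    have hc2 : ∀ (a : Fin n × Fin n) (z : Fin p → Fin n × Fin n),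
        (fun k => ((Fin.cons a z : Fin (p+1) → Fin n × Fin n) k).2) =
        (Fin.cons a.2 (fun k => (z k).2) : Fin (p+1) → Fin n) := by
      intro a z; funext k; refine Fin.cases ?_ (fun k => ?_) k <;> simp
    simp only [Ex_succ, hc1, hc2]
    have hdl : ∀ w, (dl n (0 : Fin (p+1)) w) = dl n (0 : Fin (p+1)) w := fun _ => rfl
    have t1 : (fun k : Fin p => dl n k.succ) = dl n (p := p) := rfl
    have t2 : (fun k : Fin p => un n k.succ) = un n (p := p) := rfl
    have t3 : ∀ a : Fin n, un n (0 : Fin (p+1)) a = 1 / (n : ℝ) := fun _ => rfl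
    rw [t1]; simp only [t2, t3]
    set g : Fin n → ℝ := fun a => Ex (un n) (fun z => G (Fin.cons a z)) with hg
    set h : Fin n → ℝ := fun a => Ex (un n) (fun z => H (Fin.cons a z)) with hh
    set g2 : Fin n → ℝ := fun a => Ex (un n) (fun z => G (Fin.cons a z) ^ 2) with hg2
    set h2 : Fin n → ℝ := fun a => Ex (un n) (fun z => H (Fin.cons a z) ^ 2) with hh2
    have step : ∑ w : Fin n × Fin n, dl n (0 : Fin (p+1)) w * ((g w.1 - h w.2) ^ 2 +
        1 / 2 * ((g2 w.1 - g w.1 ^ 2) + (h2 w.2 - h w.2 ^ 2))) ≤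
        ∑ w : Fin n × Fin n, dl n (0 : Fin (p+1)) w * Ex (dl n) (fun z =>
          (G (Fin.cons w.1 fun k => (z k).1) - H (Fin.cons w.2 fun k => (z k).2)) ^ 2) := by
      refine Finset.sum_le_sum fun w _ => mul_le_mul_of_nonneg_left ?_ ((dl_law hn).1 _ _)
      exact ih (fun z => G (Fin.cons w.1 z)) (fun z => H (Fin.cons w.2 z))
    refine le_trans ?_ step
    have hsplit : ∑ w : Fin n × Fin n, dl n (0 : Fin (p+1)) w * ((g w.1 - h w.2) ^ 2 +
        1 / 2 * ((g2 w.1 - g w.1 ^ 2) + (h2 w.2 - h w.2 ^ 2))) =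
        ∑ w : Fin n × Fin n, dl n (0 : Fin (p+1)) w * (g w.1 - h w.2) ^ 2 +
        1 / 2 * (∑ w : Fin n × Fin n, dl n (0 : Fin (p+1)) w * (g2 w.1 - g w.1 ^ 2) +
          ∑ w : Fin n × Fin n, dl n (0 : Fin (p+1)) w * (h2 w.2 - h w.2 ^ 2)) := by
      rw [← Finset.sum_add_distrib, Finset.mul_sum, ← Finset.sum_add_distrib]
      exact Finset.sum_congr rfl fun w _ => by ring
    rw [hsplit, dl_marg1 hn (0 : Fin (p+1)) (fun a => g2 a - g a ^ 2),
      dl_marg2 hn (0 : Fin (p+1)) (fun a => h2 a - h a ^ 2)]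
    have := gap1 hn (0 : Fin (p+1)) g h
    simp only [mul_sub, Finset.sum_sub_distrib] at this ⊢
    linarith

lemma var_eq {n : ℕ} (hn : 0 < n) {p : ℕ} (G : (Fin p → Fin n) → ℝ) :
    (Ex (un n) fun a => Ex (un n) fun b => (G a - G b) ^ 2) =
      2 * (Ex (un n) (fun x => G x ^ 2) - Ex (un n) G ^ 2) := by
  have h1 : ∀ a b, (G a - G b) ^ 2 = G a ^ 2 + (-2 * G a) * G b + G b ^ 2 := by intros; ring
  have hu : IsLaw (un n (p := p)) := un_law hn
  simp only [h1, Ex_add, Ex_cmul, Ex_const hu]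
  have h2 : ∀ a, -2 * G a * Ex (un n) G = (-2 * Ex (un n) G) * G a := by intros; ring
  simp only [h2, Ex_cmul]
  ring

lemma gapA {n : ℕ} (hn : 3 ≤ n) {p : ℕ} (G H : (Fin p → Fin n) → ℝ) :
    (Ex (un n) fun a => Ex (un n) fun b => (G a - G b) ^ 2) ≤
      4 * Ex (dl n) (fun w => (G (fun k => (w k).1) - H (fun k => (w k).2)) ^ 2) := by
  have h1 := gap hn G H
  have hu : IsLaw (un n (p := p)) := un_law (by omega)
  have h2 : 0 ≤ Ex (un n) fun a => Ex (un n) fun b => (H a - H b) ^ 2 :=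
    Ex_nonneg hu fun a => Ex_nonneg hu fun b => sq_nonneg _
  rw [var_eq (by omega)] at h2 ⊢
  nlinarith [sq_nonneg (Ex (un n) G - Ex (un n) H)]

lemma gapB {n : ℕ} (hn : 3 ≤ n) {p : ℕ} (G : (Fin p → Fin n) → ℝ) :
    (Ex (un n) fun a => Ex (un n) fun b => (G a - G b) ^ 2) ≤
      2 * Ex (dl n) (fun w => (G (fun k => (w k).1) - G (fun k => (w k).2)) ^ 2) := by
  have h1 := gap hn G G
  rw [var_eq (by omega)]
  nlinarith


section bij
variable {n : ℕ} {μ : (Fin n → Fin n) → ℝ}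

lemma mu_swap (hnonneg : ∀ x, 0 ≤ μ x)
    (hsupp : ∀ x : Fin n → Fin n, 0 < μ x ↔ Function.Surjective x)
    (hinv : ∀ π : Equiv.Perm (Fin n), ∀ x : Fin n → Fin n, μ (fun i => π (x i)) = μ x)
    (σ : Equiv.Perm (Fin n)) (x : Fin n → Fin n) : μ (fun i => x (σ i)) = μ x := by
  by_cases hx : Function.Surjective x
  · let e := Equiv.ofBijective x (Finite.surjective_iff_bijective.1 hx)
    have := hinv ((e.symm.trans σ).trans e) x
    rw [← this]
    congr 1
    funext i
    have h1 : e.symm (x i) = i := e.symm_apply_apply i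
    simp only [Equiv.trans_apply, h1]
    rfl
  · have h1 : ¬ 0 < μ x := fun h => hx ((hsupp x).1 h)
    have h2 : ¬ 0 < μ (fun i => x (σ i)) := fun h => hx (by
      have := (hsupp _).1 h
      intro c; obtain ⟨i, hi⟩ := this c; exact ⟨σ i, hi⟩)
    have := hnonneg x
    have := hnonneg (fun i => x (σ i))
    linarith

lemma pair_law (hn : 3 ≤ n) (hnonneg : ∀ x, 0 ≤ μ x) (hsum : ∑ x : Fin n → Fin n, μ x = 1)
    (hsupp : ∀ x : Fin n → Fin n, 0 < μ x ↔ Function.Surjective x)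
    (hinv : ∀ π : Equiv.Perm (Fin n), ∀ x : Fin n → Fin n, μ (fun i => π (x i)) = μ x)
    {l j : Fin n} (hlj : l ≠ j) {p : ℕ} (k : Fin p) (g : Fin n × Fin n → ℝ) :
    ∑ x, μ x * g (x l, x j) = ∑ w, dl n k w * g w := by
  classical
  set ν : Fin n × Fin n → ℝ := fun w => ∑ x : Fin n → Fin n, if (x l, x j) = w then μ x else 0 with hν
  have htot : ∀ g : Fin n × Fin n → ℝ, ∑ x, μ x * g (x l, x j) = ∑ a, ν a * g a := by
    intro g
    simp only [hν, Finset.sum_mul]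
    rw [Finset.sum_comm]
    refine Finset.sum_congr rfl fun x _ => ?_
    simp [ite_mul]
  have hmove : ∀ (σ : Equiv.Perm (Fin n)) a b, ν (σ a, σ b) = ν (a, b) := by
    intro σ a b
    simp only [hν]
    rw [← (Equiv.arrowCongr (Equiv.refl (Fin n)) σ).sum_comp]
    refine Finset.sum_congr rfl fun x _ => ?_
    have : μ ((Equiv.arrowCongr (Equiv.refl (Fin n)) σ) x) = μ x := hinv σ x
    rw [this]
    have h2 : (((Equiv.arrowCongr (Equiv.refl (Fin n)) σ) x) l,
        ((Equiv.arrowCongr (Equiv.refl (Fin n)) σ) x) j) = (σ a, σ b) ↔ (x l, x j) = (a, b) := by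
      change (σ (x l), σ (x j)) = (σ a, σ b) ↔ _
      simp
    simp only [h2]
  have hdiag : ∀ a, ν (a, a) = 0 := by
    intro a
    apply Finset.sum_eq_zero
    intro x _
    split_ifs with h
    · by_contra hne
      have hs := (hsupp x).1 (lt_of_le_of_ne (hnonneg x) (Ne.symm hne))
      have hi := Finite.injective_iff_surjective.2 hs
      simp only [Prod.mk.injEq] at h
      exact hlj (hi (h.1.trans h.2.symm))
    · rfl
  let a0 : Fin n := ⟨0, by omega⟩
  let b0 : Fin n := ⟨1, by omega⟩
  have hab0 : a0 ≠ b0 := by simp [a0, b0]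
  have hall : ∀ w, ν w = ind (w.1 ≠ w.2) * ν (a0, b0) := by
    rintro ⟨a, b⟩
    by_cases hab : a = b
    · subst hab; rw [ind_false (by simp), zero_mul, hdiag]
    · rw [ind_true hab, one_mul]
      obtain ⟨e, he, h1, h2⟩ := exists_inj le_rfl hab hab0
      have := hmove (Equiv.ofBijective e (Finite.injective_iff_bijective.1 he)) a0 b0
      simp only [Equiv.ofBijective_apply, h1, h2] at this
      exact this
  have h3 : (3 : ℝ) ≤ n := by exact_mod_cast hn
  have hone := htot (fun _ => 1)
  simp only [mul_one, hsum] at hone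
  have hd := (dl_law hn (p := p)).2 k
  have hprop : ∀ w, ν w = dl n k w * (n * (n - 1) * ν (a0, b0)) := by
    intro w
    rw [hall w]; unfold dl
    have : (n : ℝ) - 1 ≠ 0 := by linarith
    have : (n : ℝ) ≠ 0 := by linarith
    field_simp
  rw [Finset.sum_congr rfl fun w _ => hprop w, ← Finset.sum_mul, hd, one_mul] at hone
  rw [htot]
  refine Finset.sum_congr rfl fun w _ => ?_
  rw [hprop w, ← hone, mul_one]

lemma two_surj {l j : Fin n} (hlj : l ≠ j) {u v : Fin n → Fin n} (hu : Function.Surjective u)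
    (hv : Function.Surjective v) (huv : ∀ i, i ≠ l → i ≠ j → u i = v i) (c : Fin n) :
    ind (u l = c) + ind (u j = c) = ind (v l = c) + ind (v j = c) := by
  classical
  have h1 : ∀ u : Fin n → Fin n, Function.Surjective u → ∑ i, ind (u i = c) = 1 := by
    intro u hu
    have := (Equiv.ofBijective u (Finite.surjective_iff_bijective.1 hu)).sum_comp (fun a => ind (a = c))
    simp only [Equiv.ofBijective_apply] at this
    rw [this, Finset.sum_eq_single c (fun b _ hb => ind_false hb) (by simp), ind_true rfl]
  have h2 : ∑ i, (ind (u i = c) - ind (v i = c)) = 0 := by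
    rw [Finset.sum_sub_distrib, h1 u hu, h1 v hv, sub_self]
  rw [Finset.sum_eq_add l j hlj (fun i _ hi => by rw [huv i hi.1 hi.2, sub_self])
    (by simp) (by simp)] at h2
  linarith

end bij

section poly
variable {n : ℕ} {μ : (Fin n → Fin n) → ℝ} {p : ℕ}

/-- the event that at least one of the tuples is not surjective -/
def bad2 (f : Fin n → (Fin p → Fin n) → Fin n) (l j : Fin n) (R : Finset (Fin p))
    (x : Fin p → Fin n → Fin n) : Prop :=
  ¬ Function.Surjective (fun i => f i (fun k => x k i)) ∨
  ¬ Function.Surjective (fun i => f i (fun k => (if k ∈ R then fun i => x k (Equiv.swap l j i) else x k) i))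

lemma bad2_le (hnonneg : ∀ x, 0 ≤ μ x) (hsum : ∑ x : Fin n → Fin n, μ x = 1)
    (hsupp : ∀ x : Fin n → Fin n, 0 < μ x ↔ Function.Surjective x)
    (hinv : ∀ π : Equiv.Perm (Fin n), ∀ x : Fin n → Fin n, μ (fun i => π (x i)) = μ x)
    (f : Fin n → (Fin p → Fin n) → Fin n) (l j : Fin n) (R : Finset (Fin p)) {δ : ℝ}
    (hpoly : Ex (fun _ => μ) (fun x => ind (¬ Function.Surjective (fun i => f i (fun k => x k i)))) ≤ δ) :
    Ex (fun _ => μ) (fun x => ind (bad2 f l j R x)) ≤ 2 * δ := by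
  have hμ : IsLaw (fun _ : Fin p => μ) := ⟨fun _ => hnonneg, fun _ => hsum⟩
  have h1 : Ex (fun _ => μ) (fun x => ind (¬ Function.Surjective (fun i => f i (fun k =>
      (if k ∈ R then fun i => x k (Equiv.swap l j i) else x k) i)))) =
      Ex (fun _ => μ) (fun x => ind (¬ Function.Surjective (fun i => f i (fun k => x k i)))) := by
    refine Ex_map (fun k (x : Fin n → Fin n) => if k ∈ R then fun i => x (Equiv.swap l j i) else x) ?_
      (fun x => ind (¬ Function.Surjective (fun i => f i (fun k => x k i))))
    intro k g
    by_cases hk : k ∈ R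
    · simp only [hk, if_true]
      rw [← (Equiv.arrowCongr (Equiv.swap l j) (Equiv.refl (Fin n))).sum_comp (fun x => μ x * g x)]
      refine Finset.sum_congr rfl fun x _ => ?_
      have e : (Equiv.arrowCongr (Equiv.swap l j) (Equiv.refl (Fin n))) x =
          fun i => x (Equiv.swap l j i) := by
        funext i; simp
      rw [e, mu_swap hnonneg hsupp hinv]
    · simp [hk]
  have h2 : Ex (fun _ => μ) (fun x => ind (bad2 f l j R x)) ≤ Ex (fun _ => μ) (fun x =>
      ind (¬ Function.Surjective (fun i => f i (fun k => x k i))) +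
      ind (¬ Function.Surjective (fun i => f i (fun k =>
      (if k ∈ R then fun i => x k (Equiv.swap l j i) else x k) i)))) :=
    Ex_mono' hμ fun x => ind_le_add fun h => h
  rw [Ex_add, h1] at h2
  linarith

lemma not_bad2 {f : Fin n → (Fin p → Fin n) → Fin n} {l j : Fin n} (hlj : l ≠ j) {R : Finset (Fin p)}
    {x : Fin p → Fin n → Fin n} (h : ¬ bad2 f l j R x) (c : Fin n) :
    ind (f l (fun k => x k l) = c) + ind (f j (fun k => x k j) = c) =
    ind (f l (mix R (fun k => x k j) (fun k => x k l)) = c) +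
    ind (f j (mix R (fun k => x k l) (fun k => x k j)) = c) := by
  unfold bad2 at h
  push Not at h
  have := two_surj hlj h.1 h.2 (by
    intro i hil hij
    congr 1
    funext k
    split_ifs
    · show x k i = x k (Equiv.swap l j i)
      rw [Equiv.swap_apply_of_ne_of_ne hil hij]
    · rfl) c
  rw [this]
  congr 4
  · funext k; simp only [mix]; split_ifs <;> simp
  · funext k; simp only [mix]; split_ifs <;> simp

lemma pair_Ex (hn : 3 ≤ n) (hnonneg : ∀ x, 0 ≤ μ x) (hsum : ∑ x : Fin n → Fin n, μ x = 1)
    (hsupp : ∀ x : Fin n → Fin n, 0 < μ x ↔ Function.Surjective x)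
    (hinv : ∀ π : Equiv.Perm (Fin n), ∀ x : Fin n → Fin n, μ (fun i => π (x i)) = μ x)
    {l j : Fin n} (hlj : l ≠ j) (F : (Fin p → Fin n) → (Fin p → Fin n) → ℝ) :
    Ex (fun _ => μ) (fun x => F (fun k => x k l) (fun k => x k j)) =
      Ex (dl n) (fun w => F (fun k => (w k).1) (fun k => (w k).2)) :=
  Ex_map (fun k (x : Fin n → Fin n) => (x l, x j))
    (fun k g => pair_law hn hnonneg hsum hsupp hinv hlj k g)
    (fun w => F (fun k => (w k).1) (fun k => (w k).2))

/-- probability that `f` changes under exchanging `(a,b)` on `R` -/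
lemma resA (hn : 3 ≤ n) (hnonneg : ∀ x, 0 ≤ μ x) (hsum : ∑ x : Fin n → Fin n, μ x = 1)
    (hsupp : ∀ x : Fin n → Fin n, 0 < μ x ↔ Function.Surjective x)
    (hinv : ∀ π : Equiv.Perm (Fin n), ∀ x : Fin n → Fin n, μ (fun i => π (x i)) = μ x)
    {l j : Fin n} (hlj : l ≠ j)
    (f : Fin n → (Fin p → Fin n) → Fin n) (R : Finset (Fin p)) {δ : ℝ}
    (hpoly : Ex (fun _ => μ) (fun x => ind (¬ Function.Surjective (fun i => f i (fun k => x k i)))) ≤ δ)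
    (c : Fin n) :
    Ex (dl n) (fun w => ((ind (f l (fun k => (w k).1) = c) -
        ind (f l (mix R (fun k => (w k).2) (fun k => (w k).1)) = c)) -
      (ind (f j (mix R (fun k => (w k).1) (fun k => (w k).2)) = c) -
        ind (f j (fun k => (w k).2) = c))) ^ 2) ≤ 8 * δ := by
  have hμ : IsLaw (fun _ : Fin p => μ) := ⟨fun _ => hnonneg, fun _ => hsum⟩
  rw [← pair_Ex hn hnonneg hsum hsupp hinv hlj (fun a b => ((ind (f l a = c) -
        ind (f l (mix R b a) = c)) - (ind (f j (mix R a b) = c) - ind (f j b = c))) ^ 2)]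
  have h1 := bad2_le hnonneg hsum hsupp hinv f l j R hpoly
  calc _ ≤ Ex (fun _ => μ) (fun x => 4 * ind (bad2 f l j R x)) := by
        refine Ex_mono' hμ fun x => ?_
        by_cases hb : bad2 f l j R x
        · rw [ind_true hb]
          unfold ind
          split_ifs <;> norm_num
        · have := not_bad2 hlj hb c
          rw [ind_false hb]
          apply le_of_eq
          rw [mul_zero, sq_eq_zero_iff]
          linarith
    _ ≤ _ := by rw [Ex_cmul]; linarith

lemma resB (hn : 3 ≤ n) (hnonneg : ∀ x, 0 ≤ μ x) (hsum : ∑ x : Fin n → Fin n, μ x = 1)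
    (hsupp : ∀ x : Fin n → Fin n, 0 < μ x ↔ Function.Surjective x)
    (hinv : ∀ π : Equiv.Perm (Fin n), ∀ x : Fin n → Fin n, μ (fun i => π (x i)) = μ x)
    {l j : Fin n} (hlj : l ≠ j)
    (f : Fin n → (Fin p → Fin n) → Fin n) (R : Finset (Fin p)) {δ : ℝ}
    (hpoly : Ex (fun _ => μ) (fun x => ind (¬ Function.Surjective (fun i => f i (fun k => x k i)))) ≤ δ) :
    Ex (dl n) (fun w => ind (f l (fun k => (w k).1) ≠ f l (mix R (fun k => (w k).2) (fun k => (w k).1)))) ≤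
    Ex (dl n) (fun w => ind (f j (fun k => (w k).2) ≠ f j (mix R (fun k => (w k).1) (fun k => (w k).2)))) +
      2 * δ := by
  have hμ : IsLaw (fun _ : Fin p => μ) := ⟨fun _ => hnonneg, fun _ => hsum⟩
  rw [← pair_Ex hn hnonneg hsum hsupp hinv hlj (fun a b => ind (f l a ≠ f l (mix R b a))),
    ← pair_Ex hn hnonneg hsum hsupp hinv hlj (fun a b => ind (f j b ≠ f j (mix R a b)))]
  have h1 := bad2_le hnonneg hsum hsupp hinv f l j R hpoly
  refine le_trans ?_ (add_le_add_right h1 _)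
  rw [← Ex_add]
  refine Ex_mono' hμ fun x => ind_le_add fun hne => ?_
  by_contra hcon
  push Not at hcon
  obtain ⟨h2, h3⟩ := hcon
  have := not_bad2 hlj h3 (f l (fun k => x k l))
  rw [h2, ind_true rfl, ind_false (Ne.symm hne)] at this
  linarith

end poly


section fin
variable {n p : ℕ}

lemma VD_le (hn : 3 ≤ n) (f : (Fin p → Fin n) → Fin n) (R : Finset (Fin p)) :
    Ex (dl n) (fun w => ind (f (fun k => (w k).2) ≠ f (mix R (fun k => (w k).1) (fun k => (w k).2)))) ≤
      2 * V f R := by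
  have hu : IsLaw (un n (p := p)) := un_law (by omega)
  have hd := dl_law hn (p := p)
  have e1 : Ex (dl n) (fun w => Ex (un n) fun z => ind (f (fun k => (w k).2) ≠ f (mix R z (fun k => (w k).2))))
      = V f R :=
    Ex_map (fun k (w : Fin n × Fin n) => w.2) (fun k g => dl_marg2 hn k g)
      (fun x => Ex (un n) fun z => ind (f x ≠ f (mix R z x)))
  have e2 : Ex (dl n) (fun w => Ex (un n) fun z =>
      ind (f (mix R (fun k => (w k).1) (fun k => (w k).2)) ≠ f (mix R z (fun k => (w k).2)))) = V f R := by
    have := Ex_map (fun k (w : Fin n × Fin n) => if k ∈ R then w.1 else w.2) (ρ := dl n) (σ := un n)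
      (fun k g => by
        by_cases hk : k ∈ R
        · simp only [hk, if_true]; exact dl_marg1 hn k g
        · simp only [hk, if_false]; exact dl_marg2 hn k g)
      (fun x => Ex (un n) fun z => ind (f x ≠ f (mix R z x)))
    refine Eq.trans ?_ this
    congr 1; funext w; congr 1; funext z
    have : mix R z (fun k => (w k).2) = mix R z (fun k => if k ∈ R then (w k).1 else (w k).2) := by
      funext k; simp only [mix]; split_ifs <;> rfl
    rw [this]; rfl
  have : 2 * V f R = Ex (dl n) (fun w => Ex (un n) fun z =>
      (ind (f (fun k => (w k).2) ≠ f (mix R z (fun k => (w k).2))) +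
      ind (f (mix R (fun k => (w k).1) (fun k => (w k).2)) ≠ f (mix R z (fun k => (w k).2))))) := by
    simp only [Ex_add]
    rw [e1, e2]; ring
  rw [this]
  refine Ex_mono' hd fun w => ?_
  rw [← Ex_const hu (ind _)]
  refine Ex_mono' hu fun z => ind_le_add fun h => ?_
  by_contra hc
  push Not at hc
  exact h (hc.1.trans hc.2.symm)

lemma ind_ne_eq (u v : Fin n) :
    2 * ind (u ≠ v) = ∑ c, (ind (u = c) - ind (v = c)) ^ 2 := by
  by_cases h : u = v
  · subst h; simp [ind_false]
  · rw [ind_true h, Finset.sum_eq_add u v h]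
    · rw [ind_true rfl, ind_false (Ne.symm h), ind_false h, ind_true rfl]; norm_num
    · rintro c - ⟨h1, h2⟩
      rw [ind_false (Ne.symm h1), ind_false (Ne.symm h2)]; norm_num
    · simp
    · simp

lemma V_le_VD (hn : 3 ≤ n) (f : (Fin p → Fin n) → Fin n) (R : Finset (Fin p)) :
    V f R ≤ 2 * Ex (dl n) (fun w =>
      ind (f (fun k => (w k).1) ≠ f (mix R (fun k => (w k).2) (fun k => (w k).1)))) := by
  have hu : IsLaw (un n (p := p)) := un_law (by omega)
  have hd := dl_law hn (p := p)
  have e1 : Ex (dl n) (fun w =>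
      ind (f (fun k => (w k).1) ≠ f (mix R (fun k => (w k).2) (fun k => (w k).1)))) =
      Ex (un n) fun x => Ex (dl n) fun w =>
        ind (f (mix R (fun k => (w k).1) x) ≠ f (mix R (fun k => (w k).2) x)) := by
    rw [← Ex_mix hd R, ← Ex_map (fun k (w : Fin n × Fin n) => w.1) (ρ := dl n) (σ := un n)
      (fun k g => dl_marg1 hn k g) (fun x => Ex (dl n) fun w =>
        ind (f (mix R (fun k => (w k).1) x) ≠ f (mix R (fun k => (w k).2) x)))]
    congr 1; funext w2; congr 1; funext w1
    have q1 : (fun k => (mix R w1 w2 k).1) = mix R (fun k => (w1 k).1) (fun k => (w2 k).1) := by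
      funext k; simp only [mix]; split_ifs <;> rfl
    have q2 : mix R (fun k => (mix R w1 w2 k).2) (fun k => (mix R w1 w2 k).1) =
        mix R (fun k => (w1 k).2) (fun k => (w2 k).1) := by
      funext k; simp only [mix]; split_ifs <;> rfl
    rw [q2, q1]
  rw [e1, V_three (by omega), ← Ex_cmul]
  refine Ex_mono' hu fun x => ?_
  have h2 : (2 : ℝ) * (Ex (un n) fun a => Ex (un n) fun b => ind (f (mix R a x) ≠ f (mix R b x))) ≤
      2 * (2 * Ex (dl n) fun w =>
        ind (f (mix R (fun k => (w k).1) x) ≠ f (mix R (fun k => (w k).2) x))) := by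
    have y1 : (2 : ℝ) * (Ex (un n) fun a => Ex (un n) fun b => ind (f (mix R a x) ≠ f (mix R b x))) =
        ∑ c, Ex (un n) fun a => Ex (un n) fun b =>
          (ind (f (mix R a x) = c) - ind (f (mix R b x) = c)) ^ 2 := by
      simp only [← Ex_cmul, ind_ne_eq, Ex_sum]
    have y2 : (2 : ℝ) * (Ex (dl n) fun w =>
        ind (f (mix R (fun k => (w k).1) x) ≠ f (mix R (fun k => (w k).2) x))) =
        ∑ c, Ex (dl n) fun w : Fin p → Fin n × Fin n => (ind (f (mix R (fun k => (w k).1) x) = c) -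
          ind (f (mix R (fun k => (w k).2) x) = c)) ^ 2 := by
      simp only [← Ex_cmul, ind_ne_eq, Ex_sum]
    rw [y1, y2, Finset.mul_sum]
    exact Finset.sum_le_sum fun c _ => gapB hn (fun a => ind (f (mix R a x) = c))
  linarith

/-- the indicator of `g (a,s)` keeps additive structure on a rectangle -/
def Rok (g : (Fin p → Fin n) → (Fin p → Fin n) → Fin n) (a b s t : Fin p → Fin n) : Prop :=
  ∀ c, ind (g a s = c) - ind (g a t = c) = ind (g b s = c) - ind (g b t = c)

lemma not_Rok_le (g : (Fin p → Fin n) → (Fin p → Fin n) → Fin n) (a b s t : Fin p → Fin n) :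
    ind (¬ Rok g a b s t) ≤
    ∑ c, ((ind (g a s = c) - ind (g a t = c)) - (ind (g b s = c) - ind (g b t = c))) ^ 2 := by
  by_cases h : Rok g a b s t
  · rw [ind_false (not_not.2 h)]; exact Finset.sum_nonneg fun c _ => sq_nonneg _
  · rw [ind_true h]
    unfold Rok at h
    push Not at h
    obtain ⟨c, hc⟩ := h
    refine le_trans ?_ (Finset.single_le_sum (fun c _ => sq_nonneg _) (Finset.mem_univ c))
    revert hc
    unfold ind
    split_ifs <;> norm_num

set_option maxHeartbeats 1000000 in
lemma rect_c {μ : (Fin n → Fin n) → ℝ} (hn : 3 ≤ n) (hnonneg : ∀ x, 0 ≤ μ x) (hsum : ∑ x : Fin n → Fin n, μ x = 1)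
    (hsupp : ∀ x : Fin n → Fin n, 0 < μ x ↔ Function.Surjective x)
    (hinv : ∀ π : Equiv.Perm (Fin n), ∀ x : Fin n → Fin n, μ (fun i => π (x i)) = μ x)
    {l j : Fin n} (hlj : l ≠ j)
    (f : Fin n → (Fin p → Fin n) → Fin n) (R : Finset (Fin p)) {δ : ℝ}
    (hpoly : Ex (fun _ => μ) (fun x => ind (¬ Function.Surjective (fun i => f i (fun k => x k i)))) ≤ δ) 
    (c : Fin n) :
    (Ex (un n) fun s => Ex (un n) fun t => Ex (un n) fun a => Ex (un n) fun b =>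
      ((ind (f l (mix R a s) = c) - ind (f l (mix R a t) = c)) -
        (ind (f l (mix R b s) = c) - ind (f l (mix R b t) = c))) ^ 2) ≤ 64 * δ := by
  have hu : IsLaw (un n (p := p)) := un_law (by omega)
  have hd := dl_law hn (p := p)
  have h1 := resA hn hnonneg hsum hsupp hinv hlj f R hpoly c
  rw [← Ex_mix hd R, Ex_comm] at h1
  have h2 : (Ex (dl n) fun w : Fin p → Fin n × Fin n => Ex (un n) fun s => Ex (un n) fun t =>
      ((ind (f l (mix R (fun k => (w k).1) s) = c) - ind (f l (mix R (fun k => (w k).2) s) = c)) -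
      (ind (f l (mix R (fun k => (w k).1) t) = c) - ind (f l (mix R (fun k => (w k).2) t) = c))) ^ 2)
      ≤ 4 * (8 * δ) := by
    refine le_trans ?_ (mul_le_mul_of_nonneg_left h1 (by norm_num))
    rw [← Ex_cmul]
    refine Ex_mono' hd fun w => ?_
    refine (gapA hn (fun s => ind (f l (mix R (fun k => (w k).1) s) = c) -
        ind (f l (mix R (fun k => (w k).2) s) = c))
      (fun s => ind (f j (mix R (fun k => (w k).1) s) = c) -
        ind (f j (mix R (fun k => (w k).2) s) = c))).trans (le_of_eq ?_)
    congr 2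
    funext v
    have q1 : (fun k => (mix R w v k).1) = mix R (fun k => (w k).1) (fun k => (v k).1) := by
      funext k; simp only [mix]; split_ifs <;> rfl
    have q2 : (fun k => (mix R w v k).2) = mix R (fun k => (w k).2) (fun k => (v k).2) := by
      funext k; simp only [mix]; split_ifs <;> rfl
    have q3 : ∀ a b d : Fin p → Fin n, mix R a (mix R b d) = mix R a d := by
      intro a b d; funext k; simp only [mix]; split_ifs <;> rfl
    have q4 : ∀ a b d : Fin p → Fin n, mix R (mix R a b) d = mix R a d := by
      intro a b d; funext k; simp only [mix]; split_ifs <;> rfl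
    simp only [q1, q2, q3, q4]
  rw [Ex_comm] at h2
  have h3 : (Ex (un n) fun s => Ex (un n) fun t => Ex (un n) fun a => Ex (un n) fun b =>
    ((ind (f l (mix R a s) = c) - ind (f l (mix R a t) = c)) -
      (ind (f l (mix R b s) = c) - ind (f l (mix R b t) = c))) ^ 2) ≤ 2 * (4 * (8 * δ)) := by
    refine le_trans ?_ (mul_le_mul_of_nonneg_left h2 (by norm_num))
    rw [← Ex_cmul]
    refine Ex_mono' hu fun s => ?_
    rw [Ex_comm (dl n), ← Ex_cmul]
    refine Ex_mono' hu fun t => ?_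
    refine (gapB hn (fun a => ind (f l (mix R a s) = c) - ind (f l (mix R a t) = c))).trans (le_of_eq ?_)
    congr 2
    funext w
    ring
  linarith

set_option maxHeartbeats 1000000 in
lemma rect {μ : (Fin n → Fin n) → ℝ} (hn : 3 ≤ n) (hnonneg : ∀ x, 0 ≤ μ x) (hsum : ∑ x : Fin n → Fin n, μ x = 1)
    (hsupp : ∀ x : Fin n → Fin n, 0 < μ x ↔ Function.Surjective x)
    (hinv : ∀ π : Equiv.Perm (Fin n), ∀ x : Fin n → Fin n, μ (fun i => π (x i)) = μ x)
    {l j : Fin n} (hlj : l ≠ j)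
    (f : Fin n → (Fin p → Fin n) → Fin n) (R : Finset (Fin p)) {δ : ℝ}
    (hpoly : Ex (fun _ => μ) (fun x => ind (¬ Function.Surjective (fun i => f i (fun k => x k i)))) ≤ δ) :
    (Ex (un n) fun s => Ex (un n) fun t => Ex (un n) fun a => Ex (un n) fun b =>
      ind (¬ Rok (fun a s => f l (mix R a s)) a b s t)) ≤ 64 * n * δ := by
  have hu : IsLaw (un n (p := p)) := un_law (by omega)
  have hd := dl_law hn (p := p)
  have main := fun c => rect_c hn hnonneg hsum hsupp hinv hlj f R hpoly c
  have h1 : (Ex (un n) fun s => Ex (un n) fun t => Ex (un n) fun a => Ex (un n) fun b =>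
      ind (¬ Rok (fun a s => f l (mix R a s)) a b s t)) ≤
      (Ex (un n) fun s => Ex (un n) fun t => Ex (un n) fun a => Ex (un n) fun b =>
      ∑ c, ((ind (f l (mix R a s) = c) - ind (f l (mix R a t) = c)) -
        (ind (f l (mix R b s) = c) - ind (f l (mix R b t) = c))) ^ 2) := by
    refine Ex_mono' hu fun s => ?_
    refine Ex_mono' hu fun t => ?_
    refine Ex_mono' hu fun a => ?_
    refine Ex_mono' hu fun b => ?_
    exact not_Rok_le (fun a s => f l (mix R a s)) a b s t
  simp only [Ex_sum] at h1
  have h2 := Finset.sum_le_sum (s := Finset.univ) fun c _ => main c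
  rw [Finset.sum_const, Finset.card_univ, Fintype.card_fin, nsmul_eq_mul] at h2
  have h3 := h1.trans h2
  have h4 : (n : ℝ) * (64 * δ) = 64 * n * δ := by ring
  rw [h4] at h3
  exact h3

lemma rok_comb {g : (Fin p → Fin n) → (Fin p → Fin n) → Fin n} {a b c x s t : Fin p → Fin n}
    (h1 : g a x ≠ g b x) (h2 : g c s ≠ g c t) (r1 : Rok g a b x s) (r2 : Rok g a c s t)
    (r3 : Rok g a b s t) : False := by
  have k1 := r1 (g a x)
  have k1' := r1 (g b x)
  have k2 := r2 (g c s)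
  have key : ∀ u v y z : Fin n, u ≠ v → (∀ d, ind (u = d) - ind (y = d) = ind (v = d) - ind (z = d)) →
      y = u ∧ z = v := by
    intro u v y z huv h
    constructor
    · by_contra hy
      have := h u
      rw [ind_true rfl, ind_false hy, ind_false (Ne.symm huv)] at this
      linarith [ind_nonneg (z = u)]
    · by_contra hz
      have := h v
      rw [ind_true rfl, ind_false huv, ind_false hz] at this
      linarith [ind_nonneg (y = v)]
  obtain ⟨e1, e2⟩ := key _ _ _ _ h1 r1
  have hab : g a s ≠ g b s := by rw [e1, e2]; exact h1
  obtain ⟨e3, e4⟩ := key _ _ _ _ hab r3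
  have := r2 (g c s)
  rw [e3, ind_true rfl, ind_false (Ne.symm h2)] at this
  linarith

lemma dicho (hn : 3 ≤ n) (f : (Fin p → Fin n) → Fin n) (R : Finset (Fin p)) {η : ℝ}
    (h : (Ex (un n) fun s => Ex (un n) fun t => Ex (un n) fun a => Ex (un n) fun b =>
      ind (¬ Rok (fun a s => f (mix R a s)) a b s t)) ≤ η) : V f R * V f Rᶜ ≤ 3 * η := by
  have hu : IsLaw (un n (p := p)) := un_law (by omega)
  have e1 : V f R = Ex (un n) fun x => Ex (un n) fun a => Ex (un n) fun b =>
      ind (f (mix R a x) ≠ f (mix R b x)) := V_three (by omega) f R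
  have e2 : V f Rᶜ = Ex (un n) fun s => Ex (un n) fun t => Ex (un n) fun c =>
      ind (f (mix R c s) ≠ f (mix R c t)) := by
    rw [V_three (by omega), Ex_comm]
    congr 1; funext s
    rw [Ex_comm]
    congr 1; funext t; congr 1; funext c
    have q : ∀ s, mix Rᶜ s c = mix R c s := by
      intro s; funext k; simp only [mix, Finset.mem_compl]; split_ifs <;> rfl
    rw [q, q]
  have e3 : V f R * V f Rᶜ = Ex (un n) fun x => Ex (un n) fun s => Ex (un n) fun t =>
      Ex (un n) fun a => Ex (un n) fun b => Ex (un n) fun c =>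
      (ind (f (mix R a x) ≠ f (mix R b x)) * ind (f (mix R c s) ≠ f (mix R c t))) := by
    have m1 : ∀ (F : (Fin p → Fin n) → ℝ) (r : ℝ), Ex (un n) F * r = Ex (un n) (fun x => F x * r) := by
      intro F r
      rw [mul_comm, ← Ex_cmul]
      congr 1; funext x; ring
    rw [e1, m1]
    congr 1; funext x
    rw [e2, ← Ex_cmul]
    congr 1; funext s
    rw [← Ex_cmul]
    congr 1; funext t
    rw [m1]
    congr 1; funext a
    rw [m1]
    congr 1; funext b
    rw [← Ex_cmul]
  rw [e3]
  have e4 : (Ex (un n) fun x => Ex (un n) fun s => Ex (un n) fun t =>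
      Ex (un n) fun a => Ex (un n) fun b => Ex (un n) fun c =>
      (ind (f (mix R a x) ≠ f (mix R b x)) * ind (f (mix R c s) ≠ f (mix R c t)))) ≤
      Ex (un n) fun x => Ex (un n) fun s => Ex (un n) fun t =>
      Ex (un n) fun a => Ex (un n) fun b => Ex (un n) fun c =>
      (ind (¬ Rok (fun a s => f (mix R a s)) a b x s) + (ind (¬ Rok (fun a s => f (mix R a s)) a c s t) +
        ind (¬ Rok (fun a s => f (mix R a s)) a b s t))) := by
    refine Ex_mono' hu fun x => Ex_mono' hu fun s => Ex_mono' hu fun t => Ex_mono' hu fun a =>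
      Ex_mono' hu fun b => Ex_mono' hu fun c => ?_
    have n1 := ind_nonneg (¬ Rok (fun a s => f (mix R a s)) a b x s)
    have n2 := ind_nonneg (¬ Rok (fun a s => f (mix R a s)) a c s t)
    have n3 := ind_nonneg (¬ Rok (fun a s => f (mix R a s)) a b s t)
    by_cases h1 : f (mix R a x) ≠ f (mix R b x)
    · by_cases h2 : f (mix R c s) ≠ f (mix R c t)
      · rw [ind_true h1, ind_true h2]
        by_cases r1 : Rok (fun a s => f (mix R a s)) a b x s
        · by_cases r2 : Rok (fun a s => f (mix R a s)) a c s t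
          · by_cases r3 : Rok (fun a s => f (mix R a s)) a b s t
            · exact (rok_comb (g := fun a s => f (mix R a s)) h1 h2 r1 r2 r3).elim
            · rw [ind_true r3] at *; linarith
          · rw [ind_true r2] at *; linarith
        · rw [ind_true r1] at *; linarith
      · rw [ind_false h2, mul_zero]; linarith
    · rw [ind_false h1, zero_mul]; linarith
  refine e4.trans ?_
  simp only [Ex_add, Ex_const hu]
  linarith

lemma key_eq (hn : 3 ≤ n) (μ : (Fin n → Fin n) → ℝ) (hnonneg : ∀ x, 0 ≤ μ x)
    (hsum : ∑ x : Fin n → Fin n, μ x = 1)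
    (hsupp : ∀ x : Fin n → Fin n, 0 < μ x ↔ Function.Surjective x)
    (hinv : ∀ π : Equiv.Perm (Fin n), ∀ x : Fin n → Fin n, μ (fun i => π (x i)) = μ x) :
    KeyClaim n n μ := by
  intro ε κ hε hκ
  have hpos : (0 : ℝ) < 768 * n + 4 := by positivity
  refine ⟨κ ^ 2 / (768 * n + 4), by positivity, ?_⟩
  intro p f hpoly hV R i l hil
  by_contra hcon
  push Not at hcon
  obtain ⟨c1, c2⟩ := hcon
  set δ := κ ^ 2 / (768 * (n : ℝ) + 4) with hδ
  have hδ2 : (768 * (n : ℝ) + 4) * δ = κ ^ 2 := by rw [hδ]; field_simp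
  have hδ0 : 0 ≤ δ := by rw [hδ]; positivity
  have hu : IsLaw (un n (p := p)) := un_law (by omega)
  have a1 := V_le_VD hn (f l) R
  have a2 := resB hn hnonneg hsum hsupp hinv (Ne.symm hil) f R hpoly
  have a3 := VD_le hn (f i) R
  have a4 := dicho hn (f i) R (rect hn hnonneg hsum hsupp hinv hil f R hpoly)
  have a5 : V (f i) Rᶜ ≤ 1 := Ex_le_one hu fun _ => Ex_le_one hu fun _ => ind_le_one _
  have a6 : V (f l) R ≤ 4 * V (f i) R + 4 * δ := by linarith
  have a7 : V (f l) R * V (f i) Rᶜ ≤ (4 * V (f i) R + 4 * δ) * V (f i) Rᶜ :=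
    mul_le_mul_of_nonneg_right a6 (by linarith)
  have a8 : κ * κ < V (f l) R * V (f i) Rᶜ := mul_lt_mul'' c1 c2 hκ.le hκ.le
  have a9 : 4 * δ * V (f i) Rᶜ ≤ 4 * δ := mul_le_of_le_one_right (by linarith) a5
  nlinarith

end fin

/-- approximate surjective classification aggregation implies closeness to a
dictatorship composed with a permutation of the categories. -/
theorem stmt0 (m n : ℕ) (hnm : n ≤ m) (hn : 2 ≤ n) (hne : ¬(m = 2 ∧ n = 2))
    (μ : (Fin m → Fin n) → ℝ)
    (hnonneg : ∀ x, 0 ≤ μ x)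
    (hsum : ∑ x : Fin m → Fin n, μ x = 1)
    (hsupp : ∀ x : Fin m → Fin n, 0 < μ x ↔ Function.Surjective x)
    (hinv : ∀ π : Equiv.Perm (Fin n), ∀ x : Fin m → Fin n,
      μ (fun i => π (x i)) = μ x) :
    ∃ ε₀ > (0 : ℝ), ∀ ε : ℝ, 0 < ε → ε < ε₀ → ∃ δ > (0 : ℝ), ∀ p : ℕ,
      ∀ f : Fin m → (Fin p → Fin n) → Fin n,
        prodPr μ p (fun xs => Function.Surjective (fun i => f i (fun k => xs k i)))
            ≥ 1 - δ →
        (∀ i : Fin m, ∀ c : Fin n,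
          unifPr (fun x : Fin p → Fin n => f i x = c) < 1 - ε) →
        ∃ k : Fin p, ∃ π : Equiv.Perm (Fin n), ∀ i : Fin m,
          unifPr (fun x : Fin p → Fin n => f i x = π (x k)) ≥ 1 - ε := by
  have hkey : KeyClaim m n μ := by
    rcases Nat.lt_or_ge n m with h | h
    · exact key_gt m n h hn μ hnonneg hsum hsupp hinv
    · obtain rfl : n = m := le_antisymm hnm h
      exact key_eq (by omega) μ hnonneg hsum hsupp hinv
  exact ending m n hnm hn μ hnonneg hsum hsupp hinv hkey
end

section
/- Let m ≥ n ≥ 2 with (m,n) ≠ (2,2). If f_1,…,f_m : [n]^p → [n] constitute a polymorphism of Surj_{m,n}, then one of the following holds: (i) there exist k ∈ [p] and a permutation π of [n] such that f_1(x) = ⋯ = f_m(x) = π(x_k) for all x ∈ [n]^p; or (ii) for each j ∈ [n] there exists i ∈ [m] such that f_i(x) = j for all x ∈ [n]^p. -/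
section helpers

variable {m n p : ℕ} {f : Fin m → (Fin p → Fin n) → Fin n}

theorem aux_H
    (hpoly : ∀ xs : Fin p → Fin m → Fin n,
      (∀ k, Function.Surjective (xs k)) →
      Function.Surjective (fun i => f i (fun k => xs k i)))
    (j : Fin n) (hj : ∀ i, ∃ x, f i x ≠ j) (S : Set (Fin m)) (y : Fin m → Fin p → Fin n)
    (hs : ∀ k c, ∃ i ∈ S, y i k = c) : ∃ i ∈ S, f i (y i) = j := by
  classical
  choose w hw using hj
  obtain ⟨i, hi⟩ := hpoly (fun k i => if i ∈ S then y i k else w i k) (by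
    intro k c
    obtain ⟨i, hi, h⟩ := hs k c
    exact ⟨i, by simp [hi, h]⟩) j
  by_cases h : i ∈ S
  · exact ⟨i, h, by simpa [h] using hi⟩
  · exact absurd (by simpa [h] using hi) (hw i)

theorem aux_bij
    (hpoly : ∀ xs : Fin p → Fin m → Fin n,
      (∀ k, Function.Surjective (xs k)) →
      Function.Surjective (fun i => f i (fun k => xs k i)))
    (e : Fin n → Fin m) (he : Function.Injective e)
    (hgood : ∀ j, (∀ i, ∃ x, f i x ≠ j) ∨ ∀ x, f (e j) x = j)
    (σ : Fin p → Equiv.Perm (Fin n)) :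
    Function.Bijective (fun c => f (e c) (fun l => σ l c)) := by
  rw [← Finite.surjective_iff_bijective]
  intro j
  rcases hgood j with h | h
  · haveI : Nonempty (Fin n) := ⟨j⟩
    obtain ⟨i, ⟨c, rfl⟩, hc⟩ := aux_H hpoly j h (Set.range e)
      (fun i l => σ l (Function.invFun e i)) (by
        intro k c
        refine ⟨e ((σ k).symm c), ⟨_, rfl⟩, ?_⟩
        simp [Function.leftInverse_invFun he _])
    refine ⟨c, ?_⟩
    simpa [Function.leftInverse_invFun he _] using hc
  · exact ⟨j, h _⟩

theorem aux_perm {α : Type*} [DecidableEq α] {c d a b : α} (h : c ≠ d) (h' : a ≠ b) :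
    ∃ σ : Equiv.Perm α, σ c = a ∧ σ d = b := by
  refine ⟨(Equiv.swap c a).trans (Equiv.swap (Equiv.swap c a d) b), ?_, ?_⟩
  · simp only [Equiv.trans_apply, Equiv.swap_apply_left]
    apply Equiv.swap_apply_of_ne_of_ne _ h'
    intro h2
    have : Equiv.swap c a c = Equiv.swap c a d := by simpa using h2
    exact h ((Equiv.swap c a).injective this)
  · simp

theorem aux_emb (hnm : n ≤ m) {c d : Fin n} (h : c ≠ d) {i i' : Fin m} (h' : i ≠ i') :
    ∃ e : Fin n → Fin m, Function.Injective e ∧ e c = i ∧ e d = i' := by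
  obtain ⟨σ, h1, h2⟩ := aux_perm (c := Fin.castLE hnm c) (d := Fin.castLE hnm d)
    (fun hh => h (Fin.castLE_injective hnm hh)) h'
  exact ⟨fun x => σ (Fin.castLE hnm x), σ.injective.comp (Fin.castLE_injective hnm), h1, h2⟩

theorem aux_avoid (hn : 3 ≤ n) (a b : Fin n) : ∃ c, c ≠ a ∧ c ≠ b := by
  obtain ⟨c, hc⟩ := Finset.exists_mem_notMem_of_card_lt_card (s := {a, b}) (t := Finset.univ)
    (lt_of_le_of_lt Finset.card_le_two (by simp; omega))
  refine ⟨c, ?_, ?_⟩ <;> rintro rfl <;> simp at hc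

theorem aux_ext (hnm : n ≤ m) (s : Finset (Fin n)) (g : Fin n → Fin m)
    (hg : Set.InjOn g s) : ∃ e : Fin n → Fin m, Function.Injective e ∧ ∀ j ∈ s, e j = g j := by
  classical
  obtain ⟨t, h1, -, h2⟩ := Finset.exists_subsuperset_card_eq (s := s.image g)
    (t := Finset.univ) (n := n) (Finset.subset_univ _)
    (Finset.card_image_le.trans (by simpa using Finset.card_le_univ s)) (by simpa using hnm)
  obtain ⟨e, he⟩ := Finset.exists_equiv_extend_of_card_eq (α := Fin n) (t := t) (by simp [h2]) h1 hg
  exact ⟨fun x => e x, Subtype.val_injective.comp e.injective, he⟩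

theorem aux_nonconst {α β : Type*} (f : (Fin p → α) → β)
    (h : ∀ y k b, f (Function.update y k b) = f y) (x y : Fin p → α) : f x = f y := by
  classical
  have : ∀ s : Finset (Fin p), f (s.piecewise x y) = f y := by
    intro s
    induction s using Finset.induction_on with
    | empty => simp
    | insert a s ha ih => rw [Finset.piecewise_insert, h, ih]
  simpa using this Finset.univ

/-- mixed case is impossible -/
theorem aux_mixed (hnm : n ≤ m) (hn : 2 ≤ n)
    (hpoly : ∀ xs : Fin p → Fin m → Fin n,
      (∀ k, Function.Surjective (xs k)) →
      Function.Surjective (fun i => f i (fun k => xs k i)))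
    (j0 j1 : Fin n) (hj0 : ∃ i, ∀ x, f i x = j0) (hj1 : ∀ i, ∃ x, f i x ≠ j1) : False := by
  classical
  have hne : j0 ≠ j1 := by
    rintro rfl
    obtain ⟨i, hi⟩ := hj0
    obtain ⟨x, hx⟩ := hj1 i
    exact hx (hi x)
  obtain ⟨x0, -⟩ := hj1 (Fin.castLE hnm j1)
  haveI : Nonempty (Fin m) := ⟨Fin.castLE hnm j1⟩
  have hex : ∀ j, ∃ i, (∃ i, ∀ x, f i x = j) → ∀ x, f i x = j := by
    intro j
    by_cases h : ∃ i, ∀ x, f i x = j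
    · obtain ⟨i, hi⟩ := h
      exact ⟨i, fun _ => hi⟩
    · exact ⟨Classical.arbitrary _, fun h' => absurd h' h⟩
  choose g hg using hex
  obtain ⟨e, he, heg⟩ := aux_ext hnm (Finset.univ.filter fun j => ∃ i, ∀ x, f i x = j) g (by
    intro a ha b hb hab
    have h1 := hg a (by simpa using ha) x0
    have h2 := hg b (by simpa using hb) x0
    rw [hab] at h1
    exact h1.symm.trans h2)
  have hc : ∀ j, (∃ i, ∀ x, f i x = j) → ∀ x, f (e j) x = j := by
    intro j hj x
    rw [heg j (by simpa using hj)]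
    exact hg j hj x
  have hgood : ∀ j, (∀ i, ∃ x, f i x ≠ j) ∨ ∀ x, f (e j) x = j := by
    intro j
    by_cases h : ∃ i, ∀ x, f i x = j
    · exact Or.inr (hc j h)
    · left
      push Not at h
      exact h
  have B := aux_bij hpoly e he hgood
  -- the function at j1 is constant
  have hconst : ∃ d, ∀ x, f (e j1) x = d := by
    by_cases h3 : 3 ≤ n
    · have key : ∀ y z : Fin p → Fin n, (∀ l, y l ≠ z l) → f (e j1) y = f (e j1) z := by
        intro y z hyz
        choose σ h1 h2 using fun l => aux_perm hne (hyz l)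
        have B1 := B σ
        have B2 := B (fun l => (Equiv.swap j0 j1).trans (σ l))
        obtain ⟨c, hcc⟩ := B1.2 (f (e j1) y)
        simp only at hcc
        have hy : (fun l => σ l j0) = y := funext h1
        have hz : (fun l => σ l j1) = z := funext h2
        by_cases c1 : c = j1
        · subst c1
          rw [hz] at hcc
          exact hcc.symm
        · exfalso
          apply c1
          apply B2.1
          simp only [Equiv.trans_apply, Equiv.swap_apply_right, hy]
          rw [← hcc]
          by_cases c0 : c = j0
          · subst c0
            rw [hc c hj0, hc c hj0]
          · simp only [Equiv.swap_apply_of_ne_of_ne c0 c1]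
      refine ⟨f (e j1) x0, fun x => ?_⟩
      choose w hw1 hw2 using fun l => aux_avoid h3 (x l) (x0 l)
      exact (key w x hw1).symm.trans (key w x0 hw2)
    · have h2 : n = 2 := by omega
      refine ⟨j1, fun x => ?_⟩
      have h01 : ∀ l, ∃ σ : Equiv.Perm (Fin n), σ j1 = x l := fun l =>
        ⟨Equiv.swap j1 (x l), by simp⟩
      choose σ hσ using h01
      have hx : (fun l => σ l j1) = x := funext hσ
      have : f (e j1) x ≠ j0 := by
        intro h
        apply hne
        apply (B σ).1
        simp only [hx, h]
        exact hc j0 hj0 _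
      subst h2
      omega
  obtain ⟨d, hd⟩ := hconst
  have hd1 : d ≠ j1 := by
    rintro rfl
    obtain ⟨x, hx⟩ := hj1 (e d)
    exact hx (hd x)
  apply hd1
  apply (B (fun _ => Equiv.refl _)).1
  simp only [hd, hc d ⟨_, hd⟩]

/-- conclusion in the case where no function is constant -/
theorem aux_dict (hnm : n ≤ m) (hn : 2 ≤ n) (hm : 3 ≤ m)
    (hpoly : ∀ xs : Fin p → Fin m → Fin n,
      (∀ k, Function.Surjective (xs k)) →
      Function.Surjective (fun i => f i (fun k => xs k i)))
    (hJ : ∀ j, ∀ i, ∃ x, f i x ≠ j) :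
    (∃ k : Fin p, ∃ π : Equiv.Perm (Fin n),
      ∀ i : Fin m, ∀ x : Fin p → Fin n, f i x = π (x k)) := by
  classical
  have B := fun e he => aux_bij hpoly e he (fun j => Or.inl (hJ j))
  obtain ⟨c0, c1, hc⟩ : ∃ c0 c1 : Fin n, c0 ≠ c1 :=
    ⟨⟨0, by omega⟩, ⟨1, by omega⟩, by simp⟩
  have pair : ∀ i i' y z, i ≠ i' → (∀ l, y l ≠ z l) → f i y ≠ f i' z := by
    intro i i' y z hi hyz heq
    obtain ⟨e, he, rfl, rfl⟩ := aux_emb hnm hc hi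
    choose σ h1 h2 using fun l => aux_perm hc (hyz l)
    apply hc
    apply (B e he σ).1
    simp only [h1, h2]
    exact heq
  have other : ∀ c : Fin n, ∃ d, d ≠ c := fun c => by
    by_cases h : c = c0
    · exact ⟨c1, by rw [h]; exact hc.symm⟩
    · exact ⟨c0, fun h' => h h'.symm⟩
  -- one-step propagation
  have L1 : ∀ k i i' a b u w, i ≠ i' → a ≠ b → (∀ l, l ≠ k → w l ≠ u l) →
      f i (Function.update u k a) ≠ f i (Function.update u k b) →
      f i' (Function.update w k a) = f i (Function.update u k a) := by
    intro k i i' a b u w hi hab hwu hne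
    obtain ⟨e, he, rfl, rfl⟩ := aux_emb hnm hc hi
    have hyz : ∀ l, Function.update u k a l ≠ Function.update w k b l := by
      intro l
      by_cases h : l = k
      · subst h; simpa using hab
      · simpa [h] using (hwu l h).symm
    choose σ h1 h2 using fun l => aux_perm hc (hyz l)
    have B1 := B e he σ
    have B2 := B e he (Function.update σ k ((Equiv.swap c0 c1).trans (σ k)))
    have e1 : (fun l => σ l c0) = Function.update u k a := funext h1
    have e3 : (fun l => Function.update σ k ((Equiv.swap c0 c1).trans (σ k)) l c0)
        = Function.update u k b := by
      funext l
      by_cases h : l = k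
      · subst h; simp [h2]
      · simp [h, h1]
    have e4 : (fun l => Function.update σ k ((Equiv.swap c0 c1).trans (σ k)) l c1)
        = Function.update w k a := by
      funext l
      by_cases h : l = k
      · subst h; simp [h1]
      · simp [h, h2]
    obtain ⟨c, hcc⟩ := B2.2 (f (e c0) (Function.update u k a))
    simp only at hcc
    by_cases hc0 : c = c0
    · subst hc0
      rw [e3] at hcc
      exact absurd hcc.symm hne
    by_cases hc1 : c = c1
    · subst hc1
      rw [e4] at hcc
      exact hcc
    · exfalso
      apply hc0
      apply B1.1
      simp only [e1]
      rw [← hcc]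
      congr 1
      funext l
      by_cases h : l = k
      · subst h; simp [Equiv.swap_apply_of_ne_of_ne hc0 hc1]
      · simp [h]
  have L2 : ∀ k i a b u, a ≠ b →
      f i (Function.update u k a) ≠ f i (Function.update u k b) →
      ∀ i' w, f i' (Function.update w k a) = f i (Function.update u k a) := by
    intro k i a b u hab hne i' w
    obtain ⟨i'', hi1, hi2⟩ := aux_avoid hm i i'
    by_cases h3 : 3 ≤ n
    · choose v hv1 hv2 using fun l => aux_avoid h3 (u l) (w l)
      have s1 := L1 k i i'' a b u v hi1.symm hab (fun l _ => hv1 l) hne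
      have s2 := L1 k i i'' b a u v hi1.symm hab.symm (fun l _ => hv1 l) hne.symm
      rw [← s1]
      exact L1 k i'' i' a b v w hi2 hab (fun l _ => (hv2 l).symm) (by rw [s1, s2]; exact hne)
    · have h2 : n = 2 := by omega
      subst h2
      have same : ∀ i i' y, f i y = f i' y := by
        intro i i' y
        obtain ⟨j, hj1, hj2⟩ := aux_avoid hm i i'
        choose z hz using fun l => other (y l)
        have := pair j i z y hj1 hz
        have := pair j i' z y hj2 hz
        omega
      obtain ⟨i3, h31, h32⟩ := aux_avoid hm i i''
      choose y2 hy2 using fun l => other (Function.update u k b l)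
      choose y3 hy3 using fun l => other (Function.update w k a l)
      have p2 := pair i'' i y2 _ hi1 hy2
      have p3 := pair i3 i y3 _ h31 hy3
      obtain ⟨t, ht, hft⟩ := aux_H hpoly (f i (Function.update u k b)) (hJ _) {i, i'', i3}
        (fun t => if t = i then Function.update u k a else if t = i'' then y2 else y3) (by
          intro l c
          by_cases hl : l = k
          · subst hl
            have q3 := hy3 l
            simp only [Function.update_self] at q3
            by_cases hca : c = a
            · exact ⟨i, by simp, by simp [hca]⟩
            · refine ⟨i3, by simp, ?_⟩
              simp only [h31, h32, if_false]
              omega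
          · have q2 := hy2 l
            simp only [Function.update_of_ne hl] at q2
            by_cases hca : c = u l
            · exact ⟨i, by simp, by simp [hca, hl]⟩
            · refine ⟨i'', by simp, ?_⟩
              simp only [hi1, if_false, if_true]
              omega)
      rw [same i' i]
      simp only [Set.mem_insert_iff, Set.mem_singleton_iff] at ht
      rcases ht with rfl | rfl | rfl
      · simp only [if_true] at hft
        exact absurd hft hne
      · simp only [hi1, if_false, if_true] at hft
        exact absurd hft p2
      · simp only [h31, h32, if_false] at hft
        omega
  -- find the coordinate
  let i0 : Fin m := ⟨0, by omega⟩
  obtain ⟨u, k, b, hub⟩ : ∃ y k b, f i0 (Function.update y k b) ≠ f i0 y := by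
    by_contra hcon
    push Not at hcon
    obtain ⟨x, hx⟩ := hJ (f i0 (fun _ => c0)) i0
    exact hx (aux_nonconst (f i0) hcon _ _)
  obtain ⟨a, ha⟩ : ∃ a, a = u k := ⟨_, rfl⟩
  have hua : Function.update u k a = u := by rw [ha]; simp
  have hne : f i0 (Function.update u k a) ≠ f i0 (Function.update u k b) := by
    rw [hua]; exact hub.symm
  have hab : a ≠ b := by
    rintro rfl
    exact hne rfl
  have Ca := L2 k i0 a b u hab hne
  obtain ⟨i1, hi1, -⟩ := aux_avoid hm i0 i0
  choose w hw using fun l => other (u l)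
  have hupd : ∀ c d, c ≠ d → ∀ l, Function.update u k c l ≠ Function.update w k d l := by
    intro c d hcd l
    by_cases h : l = k
    · subst h; simpa using hcd
    · simpa [h] using (hw l).symm
  have C : ∀ c i' w, f i' (Function.update w k c) = f i0 (Function.update u k c) := by
    intro c
    by_cases hca : c = a
    · rw [hca]; exact Ca
    · apply L2 k i0 c a u hca
      rw [← Ca i1 w]
      exact pair _ _ _ _ hi1.symm (hupd c a hca)
  have hinj : Function.Injective (fun c => f i0 (Function.update u k c)) := by
    intro c d hcd
    by_contra h
    simp only at hcd
    rw [← C d i1 w] at hcd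
    exact pair _ _ _ _ hi1.symm (hupd c d h) hcd
  refine ⟨k, Equiv.ofBijective _ (Finite.injective_iff_bijective.1 hinj), fun i x => ?_⟩
  simp only [Equiv.ofBijective_apply]
  rw [← C (x k) i x]
  simp

end helpers

/-- every polymorphism of `Surj_{m,n}` (for `m ≥ n ≥ 2`, `(m,n) ≠ (2,2)`) is
either a dictatorship composed with a permutation, or a certificate. -/
theorem stmt1 (m n p : ℕ) (hnm : n ≤ m) (hn : 2 ≤ n) (hne : ¬(m = 2 ∧ n = 2))
    (f : Fin m → (Fin p → Fin n) → Fin n)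
    (hpoly : ∀ xs : Fin p → Fin m → Fin n,
      (∀ k, Function.Surjective (xs k)) →
      Function.Surjective (fun i => f i (fun k => xs k i))) :
    (∃ k : Fin p, ∃ π : Equiv.Perm (Fin n),
      ∀ i : Fin m, ∀ x : Fin p → Fin n, f i x = π (x k)) ∨
    (∀ j : Fin n, ∃ i : Fin m, ∀ x : Fin p → Fin n, f i x = j) := by
  by_cases h : ∀ j : Fin n, ∃ i : Fin m, ∀ x : Fin p → Fin n, f i x = j
  · exact Or.inr h
  · left
    push Not at h
    obtain ⟨j1, hj1⟩ := h
    refine aux_dict hnm hn (by omega) hpoly ?_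
    intro j0
    by_contra hcon
    push Not at hcon
    exact aux_mixed hnm hn hpoly j0 j1 hcon hj1
end

section
/- Let m ≥ n ≥ 3. If f_1,…,f_m : [n] → [n] are such that (f_1(x_1),…,f_m(x_m)) ∈ Surj_{m,n} for every (x_1,…,x_m) ∈ Surj_{m,n} (that is, f_1,…,f_m constitute an arity-1 polymorphism of Surj_{m,n}), then one of the following holds: (i) there exists a permutation π of [n] such that f_1 = ⋯ = f_m = π; or (ii) for each j ∈ [n] there exists i ∈ [m] such that f_i is the constant j function. -/
lemma hall_aux (m n : ℕ) (hnm : n ≤ m)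
    (f : Fin m → Fin n → Fin n)
    (hpoly : ∀ x : Fin m → Fin n, Function.Surjective x →
      Function.Surjective (fun i => f i (x i))) (j : Fin n)
    (hj : ∀ i, ∃ s, f i s ≠ j) :
    ∃ S : Finset (Fin n), (Finset.univ.filter (fun i => ∃ s ∈ S, f i s ≠ j)).card < S.card ∧
      S.card < n := by
  classical
  have key : ∃ S : Finset (Fin n),
      (Finset.univ.filter (fun i => ∃ s ∈ S, f i s ≠ j)).card < S.card := by
    by_contra! hcon
    have h := (Finset.all_card_le_biUnion_card_iff_exists_injective
      (fun s : Fin n => Finset.univ.filter (fun i : Fin m => f i s ≠ j))).1 (by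
        intro S
        refine (hcon S).trans (Finset.card_le_card ?_)
        intro i hi
        simpa using hi)
    obtain ⟨g, hg, hgm⟩ := h
    choose w hw using hj
    let x : Fin m → Fin n := fun i => if h : ∃ s, g s = i then h.choose else w i
    have hx1 : ∀ s, x (g s) = s := by
      intro s
      have h : ∃ t, g t = g s := ⟨s, rfl⟩
      have : x (g s) = h.choose := dif_pos h
      rw [this]
      exact hg h.choose_spec
    obtain ⟨i, hi⟩ := hpoly x (fun s => ⟨g s, hx1 s⟩) j
    by_cases h : ∃ s, g s = i
    · obtain ⟨s, rfl⟩ := h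
      have := hgm s
      simp only [Finset.mem_filter] at this
      apply this.2
      simpa [hx1] using hi
    · have : x i = w i := dif_neg h
      simp only [this] at hi
      exact hw i hi
  obtain ⟨S, hS⟩ := key
  refine ⟨S, hS, ?_⟩
  have hle : S.card ≤ n := by simpa using S.card_le_univ
  rcases hle.lt_or_eq with h | h
  · exact h
  · exfalso
    have : S = Finset.univ := by
      apply Finset.eq_univ_of_card; simpa using h
    subst this
    have h2 : (Finset.univ.filter (fun i => ∃ s ∈ (Finset.univ : Finset (Fin n)), f i s ≠ j))
        = Finset.univ := by
      ext i; simpa using hj i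
    rw [h2] at hS
    simp at hS
    omega

lemma arith_aux (m n c a : ℤ) (hn : 3 ≤ n) (hnm : n ≤ m) (hc : 0 ≤ c) (h1 : c + 1 ≤ a)
    (h2 : a ≤ n - 1) : n * (m - c) ≤ (n - c) * (a * (m + 1 - a)) ∧
      (n * (m - c) = (n - c) * (a * (m + 1 - a)) → c = 0 ∧ a = 1) := by
  by_cases h : a ≤ m - c
  · have e1 : (c + 1) * (m - c) ≤ a * (m + 1 - a) := by
      nlinarith [mul_nonneg (sub_nonneg.2 h1) (sub_nonneg.2 h)]
    have e2 : (n - c) * ((c + 1) * (m - c)) ≤ (n - c) * (a * (m + 1 - a)) :=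
      mul_le_mul_of_nonneg_left e1 (by linarith)
    have e3 : (n - c) * ((c + 1) * (m - c)) = n * (m - c) + c * (n - c - 1) * (m - c) := by ring
    have e4 : 0 ≤ c * (n - c - 1) * (m - c) :=
      mul_nonneg (mul_nonneg hc (by linarith)) (by linarith)
    refine ⟨by linarith, fun heq => ?_⟩
    have hc0 : c = 0 := by
      by_contra hne
      have : 0 < c * (n - c - 1) * (m - c) :=
        mul_pos (mul_pos (by omega) (by linarith)) (by linarith)
      linarith
    refine ⟨hc0, ?_⟩
    subst hc0
    by_contra hne
    have : 0 < n * ((a - 1) * (m - a)) :=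
      mul_pos (by linarith) (mul_pos (by omega) (by linarith))
    nlinarith
  · push Not at h
    have e1 : (n - 1) * (m - n + 2) ≤ a * (m + 1 - a) := by
      have : 0 ≤ (n - 1 - a) * (a - (m - n + 2)) := mul_nonneg (by linarith) (by linarith)
      nlinarith
    have e2 : (n - c) * ((n - 1) * (m - n + 2)) ≤ (n - c) * (a * (m + 1 - a)) :=
      mul_le_mul_of_nonneg_left e1 (by linarith)
    have e3 : (n - c) * ((n - 1) * (m - n + 2)) = n * (m - c) +
      ((m - n) * ((n - c - 2) * (n - 1) + (n - 2)) + (n - c) * (n - 2)) := by ring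
    have e4 : 0 ≤ (m - n) * ((n - c - 2) * (n - 1) + (n - 2)) :=
      mul_nonneg (by linarith)
        (add_nonneg (mul_nonneg (by linarith) (by linarith)) (by linarith))
    have e5 : 0 < (n - c) * (n - 2) := mul_pos (by linarith) (by linarith)
    exact ⟨by linarith, fun heq => by linarith⟩

/-- every arity-1 polymorphism of `Surj_{m,n}` (for `m ≥ n ≥ 3`) is
either a common permutation, or a certificate. -/
theorem stmt2 (m n : ℕ) (hn : 3 ≤ n) (hnm : n ≤ m)
    (f : Fin m → Fin n → Fin n)
    (hpoly : ∀ x : Fin m → Fin n, Function.Surjective x →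
      Function.Surjective (fun i => f i (x i))) :
    (∃ π : Equiv.Perm (Fin n), ∀ i : Fin m, f i = ⇑π) ∨
    (∀ j : Fin n, ∃ i : Fin m, ∀ s : Fin n, f i s = j) := by
  classical
  by_cases hii : ∀ j : Fin n, ∃ i : Fin m, ∀ s : Fin n, f i s = j
  · exact Or.inr hii
  left
  let C : Finset (Fin n) := Finset.univ.filter (fun j => ∃ i : Fin m, ∀ s : Fin n, f i s = j)
  have hC : ∀ j, j ∈ C ↔ ∃ i : Fin m, ∀ s : Fin n, f i s = j := by intro j; simp [C]
  have hI : ∃ I : Finset (Fin m), I.card = C.card ∧ ∀ i ∈ I, ∃ j ∈ C, ∀ s, f i s = j := by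
    have h : ∀ j : C, ∃ i : Fin m, ∀ s : Fin n, f i s = j := fun j => (hC j).1 j.2
    choose k hk using h
    refine ⟨Finset.univ.image k, ?_, ?_⟩
    · rw [Finset.card_image_of_injective]
      · simp
      · intro a b hab
        have s : Fin n := ⟨0, by omega⟩
        apply Subtype.ext
        rw [← hk a s, ← hk b s, hab]
    · intro i hi
      simp only [Finset.mem_image, Finset.mem_univ, true_and] at hi
      obtain ⟨j, rfl⟩ := hi
      exact ⟨j, j.2, hk j⟩
  obtain ⟨I, hIc, hI⟩ := hI
  have hS : ∀ j, ∃ S : Finset (Fin n), j ∉ C →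
      (Finset.univ.filter (fun i => ∃ s ∈ S, f i s ≠ j)).card < S.card ∧ S.card < n := by
    intro j
    by_cases hj : j ∈ C
    · exact ⟨∅, fun h => absurd hj h⟩
    · obtain ⟨S, h⟩ := hall_aux m n hnm f hpoly j (by
        have := mt (hC j).2 hj
        push Not at this
        exact this)
      exact ⟨S, fun _ => h⟩
  choose S hS using hS
  let B : Fin n → Finset (Fin m) := fun j => Finset.univ.filter (fun i => ∃ s ∈ S j, f i s ≠ j)
  have hBm : ∀ i j, i ∉ B j ↔ ∀ s ∈ S j, f i s = j := by intro i j; simp [B]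
  have hIB : ∀ j, j ∉ C → I ⊆ B j := by
    intro j hj i hi
    by_contra hn
    rw [hBm] at hn
    obtain ⟨c, hc, hcs⟩ := hI i hi
    have hpos : 0 < (S j).card := lt_of_le_of_lt (Nat.zero_le _) (hS j hj).1
    obtain ⟨s, hs⟩ := Finset.card_pos.1 hpos
    have := hn s hs
    rw [hcs s] at this
    exact hj (this ▸ hc)
  have hBc : ∀ j, j ∉ C → (B j).card < (S j).card := fun j hj => (hS j hj).1
  have hca : ∀ j, j ∉ C → C.card < (S j).card := fun j hj =>
    lt_of_le_of_lt (hIc ▸ Finset.card_le_card (hIB j hj)) (hBc j hj)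
  -- double counting
  have hrow : ∀ i, ∑ j ∈ Cᶜ, (if i ∉ B j then (S j).card else 0) ≤ n := by
    intro i
    rw [← Finset.sum_filter, ← Finset.card_biUnion]
    · simpa using Finset.card_le_univ ((Finset.filter (fun j => i ∉ B j) Cᶜ).biUnion S)
    · intro j hj k hk hjk
      replace hj := Finset.mem_filter.1 (Finset.mem_coe.1 hj)
      replace hk := Finset.mem_filter.1 (Finset.mem_coe.1 hk)
      change Disjoint (S j) (S k)
      rw [Finset.disjoint_left]
      intro s hsj hsk
      exact hjk (((hBm i j).1 hj.2 s hsj).symm.trans ((hBm i k).1 hk.2 s hsk))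
  have htot : ∑ i ∈ Iᶜ, ∑ j ∈ Cᶜ, (if i ∉ B j then (S j).card else 0) ≤ (m - C.card) * n := by
    refine (Finset.sum_le_card_nsmul _ _ n (fun i _ => hrow i)).trans ?_
    rw [Finset.card_compl, hIc]; simp
  rw [Finset.sum_comm] at htot
  have hCm : C.card ≤ n := by simpa using C.card_le_univ
  have hcol : ∀ j ∈ Cᶜ, (S j).card * (m + 1 - (S j).card) ≤
      ∑ i ∈ Iᶜ, (if i ∉ B j then (S j).card else 0) := by
    intro j hj
    have hj' : j ∉ C := by simpa using hj
    rw [← Finset.sum_filter, Finset.sum_const, smul_eq_mul, mul_comm]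
    apply Nat.mul_le_mul_right
    have : Finset.filter (fun i => i ∉ B j) Iᶜ = (B j)ᶜ := by
      ext i
      simp only [Finset.mem_filter, Finset.mem_compl, and_iff_right_iff_imp]
      exact fun h h' => h (hIB j hj' h')
    rw [this, Finset.card_compl, Fintype.card_fin]
    have := hBc j hj'
    omega
  have hN : ∑ j ∈ Cᶜ, (S j).card * (m + 1 - (S j).card) ≤ (m - C.card) * n :=
    (Finset.sum_le_sum hcol).trans htot
  have hZ : ∑ j ∈ Cᶜ, ((S j).card : ℤ) * (m + 1 - (S j).card) ≤ (m - C.card) * n := by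
    have h := (Nat.cast_le (α := ℤ)).2 hN
    rw [Nat.cast_sum, Nat.cast_mul, Nat.cast_sub (by omega)] at h
    refine le_trans (le_of_eq (Finset.sum_congr rfl ?_)) h
    intro j hj
    have := (hS j (by simpa using hj)).2
    rw [Nat.cast_mul, Nat.cast_sub (by omega)]
    push_cast; ring
  have har : ∀ j ∈ Cᶜ, _ := fun j hj => arith_aux m n C.card (S j).card (by exact_mod_cast hn)
    (by exact_mod_cast hnm) (by positivity)
    (by have := hca j (by simpa using hj); omega)
    (by have := (hS j (by simpa using hj)).2; omega)
  have hsum : ∑ j ∈ Cᶜ, (((n : ℤ) - C.card) * ((S j).card * (m + 1 - (S j).card))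
      - n * (m - C.card)) ≤ 0 := by
    rw [Finset.sum_sub_distrib, ← Finset.mul_sum, Finset.sum_const, Finset.card_compl,
      Fintype.card_fin, nsmul_eq_mul, Nat.cast_sub hCm]
    have h0 : (0 : ℤ) ≤ n - C.card := by
      have : (C.card : ℤ) ≤ n := by exact_mod_cast hCm
      linarith
    have := mul_le_mul_of_nonneg_left hZ h0
    linarith
  have hnn : ∀ j ∈ Cᶜ, 0 ≤ (((n : ℤ) - C.card) * ((S j).card * (m + 1 - (S j).card))
      - n * (m - C.card)) := fun j hj => sub_nonneg.2 (har j hj).1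
  have hz := (Finset.sum_eq_zero_iff_of_nonneg hnn).1 (le_antisymm hsum (Finset.sum_nonneg hnn))
  have hca1 : ∀ j ∈ Cᶜ, (C.card : ℤ) = 0 ∧ ((S j).card : ℤ) = 1 := fun j hj =>
    (har j hj).2 (sub_eq_zero.1 (hz j hj)).symm
  push Not at hii
  obtain ⟨j0, hj0⟩ := hii
  have hj0' : j0 ∈ Cᶜ := by
    rw [Finset.mem_compl, hC]; push Not; exact hj0
  have hCe : C = ∅ := by
    have := (hca1 j0 hj0').1
    exact Finset.card_eq_zero.1 (by exact_mod_cast this)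
  have hall : ∀ j, ∃ s, ∀ i, f i s = j := by
    intro j
    have hjC : j ∉ C := by simp [hCe]
    have h1 : (S j).card = 1 := by exact_mod_cast (hca1 j (by simpa using hjC)).2
    have hB := hBc j hjC
    rw [h1] at hB
    have hBe : B j = ∅ := Finset.card_eq_zero.1 (by omega)
    obtain ⟨s, hs⟩ := Finset.card_eq_one.1 h1
    exact ⟨s, fun i => (hBm i j).1 (by simp [hBe]) s (by simp [hs])⟩
  choose g hg using hall
  have i0 : Fin m := ⟨0, by omega⟩
  have hginj : Function.Injective g := fun a b h => by rw [← hg a i0, ← hg b i0, h]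
  have hgs : Function.Bijective g := Finite.injective_iff_bijective.1 hginj
  refine ⟨(Equiv.ofBijective g hgs).symm, fun i => ?_⟩
  funext s
  obtain ⟨j, rfl⟩ := hgs.2 s
  rw [hg j i]
  exact ((Equiv.ofBijective g hgs).symm_apply_apply j).symm
end

section
/- Let n ≥ 3 and let f_1,…,f_n : [n] → [n] be functions such that for every permutation (x_1,…,x_n) of [n], the vector (f_1(x_1),…,f_n(x_n)) is again a permutation of [n]. Then either there exists a permutation π of [n] such that f_i = π for all i ∈ [n], or every f_i is constant and the map sending i to the constant value of f_i is a permutation of [n]. -/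
/-- if `f_1,…,f_n : [n] → [n]` map every permutation (applied coordinatewise)
to a permutation, then either all `f_i` equal a common permutation, or each `f_i` is
constant and the constants form a permutation of `[n]`. -/
theorem stmt3 (n : ℕ) (hn : 3 ≤ n)
    (f : Fin n → Fin n → Fin n)
    (hpoly : ∀ x : Fin n → Fin n, Function.Bijective x →
      Function.Bijective (fun i => f i (x i))) :
    (∃ π : Equiv.Perm (Fin n), ∀ i : Fin n, f i = ⇑π) ∨
    (∃ π : Equiv.Perm (Fin n), ∀ i : Fin n, ∀ s : Fin n, f i s = π i) := by
  have hx : ∀ i j a b : Fin n, i ≠ j → a ≠ b →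
      ∃ x : Equiv.Perm (Fin n), x i = a ∧ x j = b := by
    intro i j a b hij hab
    have hne : a ≠ Equiv.swap i a j := by
      intro h
      apply hij
      apply (Equiv.swap i a).injective
      rw [Equiv.swap_apply_left]
      exact h
    refine ⟨Equiv.swap (Equiv.swap i a j) b * Equiv.swap i a, ?_, ?_⟩
    · rw [Equiv.Perm.mul_apply, Equiv.swap_apply_left, Equiv.swap_apply_of_ne_of_ne hne hab]
    · rw [Equiv.Perm.mul_apply, Equiv.swap_apply_left]
  have h1 : ∀ i j a b : Fin n, i ≠ j → a ≠ b → f i a ≠ f j b := by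
    intro i j a b hij hab h
    obtain ⟨x, hi, hj⟩ := hx i j a b hij hab
    apply hij
    apply (hpoly x x.bijective).1
    simpa [hi, hj] using h
  have hW : ∀ i j a b : Fin n, i ≠ j → a ≠ b → f i a = f i b ∨ f i a = f j a := by
    intro i j a b hij hab
    obtain ⟨x, hi, hj⟩ := hx i j a b hij hab
    obtain ⟨k, hk⟩ := (hpoly _ (x * Equiv.swap i j).bijective).2 (f i a)
    simp only [Equiv.Perm.mul_apply] at hk
    by_cases hki : k = i
    · subst hki
      rw [Equiv.swap_apply_left, hj] at hk
      exact Or.inl hk.symm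
    by_cases hkj : k = j
    · subst hkj
      rw [Equiv.swap_apply_right, hi] at hk
      exact Or.inr hk.symm
    rw [Equiv.swap_apply_of_ne_of_ne hki hkj] at hk
    refine absurd ((hpoly x x.bijective).1 (a₁ := k) (a₂ := i) ?_) hki
    simpa [hi] using hk
  by_cases hE : ∃ i j a, i ≠ j ∧ f i a = f j a
  · left
    obtain ⟨i, j, a, hij, h⟩ := hE
    have hfe : ∀ b, f i b = f j b := by
      intro b
      by_cases hab : a = b
      · rw [← hab, h]
      have := hW i j b a hij (Ne.symm hab)
      have := h1 j i a b hij.symm hab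
      grind
    have hinj : Function.Injective (f i) := by
      intro c d hcd
      by_contra hne
      exact h1 i j c d hij hne (hcd.trans (hfe d))
    refine ⟨Equiv.ofBijective (f i) (Finite.injective_iff_bijective.1 hinj), fun k => ?_⟩
    rw [Equiv.coe_ofBijective]
    by_cases hik : i = k
    · rw [hik]
    funext c
    obtain ⟨d, hd⟩ : ∃ d : Fin n, c ≠ d := by
      by_cases hc : c = i
      · exact ⟨j, hc ▸ hij⟩
      · exact ⟨i, hc⟩
    rcases hW i k c d hik hd with h' | h'
    · exact absurd (hinj h') hd
    · exact h'.symm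
  · right
    push Not at hE
    have hc : ∀ i a b, f i a = f i b := by
      intro i a b
      by_cases hab : a = b
      · rw [hab]
      obtain ⟨j, hj⟩ : ∃ j : Fin n, i ≠ j := by
        by_cases hi : i = a
        · exact ⟨b, hi ▸ hab⟩
        · exact ⟨a, hi⟩
      exact (hW i j a b hj hab).resolve_right (hE i j a hj)
    have hinj : Function.Injective (fun i => f i i) := by
      intro i j hij
      by_contra hne
      exact hE i j i hne (hij.trans (hc j j i))
    exact ⟨Equiv.ofBijective _ (Finite.injective_iff_bijective.1 hinj), fun i s => hc i s i⟩
end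

section
/- In the standing context (m > n ≥ 3, an arity-1 polymorphism f_1,…,f_m : [n] → [n] of Surj_{m,n}, the sets I, C, the number c = |C| with c ≤ n − 1, and the sets I(X,r)): for each r ∈ [n] ∖ C there exists a subset X_r ⊆ [n] with c + 1 ≤ |X_r| ≤ n − 1 such that the set I(X_r, r) satisfies I(X_r, r) ∩ I = ∅ and |I(X_r, r)| ≥ m − |X_r| + 1. -/
/-- The set `I(X,r)` of indices `i` such that `f i` maps all of `X` to `r`. -/
def Iset {m n : ℕ} (f : Fin m → Fin n → Fin n) (X : Finset (Fin n)) (r : Fin n) :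
    Finset (Fin m) :=
  Finset.univ.filter (fun i => ∀ s ∈ X, f i s = r)

/-- The set `I` of indices `i` such that `f i` is constant. -/
def constIdx {m n : ℕ} (f : Fin m → Fin n → Fin n) : Finset (Fin m) :=
  Finset.univ.filter (fun i => ∃ c, ∀ s, f i s = c)

/-- The set `C` of values `j` such that some `f i` is the constant `j` function. -/
def constVals {m n : ℕ} (f : Fin m → Fin n → Fin n) : Finset (Fin n) :=
  Finset.univ.filter (fun j => ∃ i, ∀ s, f i s = j)

/-- Hall-type lemma producing the witness sets `X_r`. -/
theorem stmt4 (m n : ℕ) (hn : 3 ≤ n) (hmn : n < m)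
    (f : Fin m → Fin n → Fin n)
    (hpoly : ∀ x : Fin m → Fin n, Function.Surjective x →
      Function.Surjective (fun i => f i (x i)))
    (hc : (constVals f).card ≤ n - 1) :
    ∀ r ∉ constVals f, ∃ X : Finset (Fin n),
      (constVals f).card + 1 ≤ X.card ∧ X.card ≤ n - 1 ∧
      Iset f X r ∩ constIdx f = ∅ ∧
      m - X.card + 1 ≤ (Iset f X r).card := by
  intro r hr
  have hr' : ∀ i, ∃ s, f i s ≠ r := by
    intro i
    by_contra h
    push Not at h
    exact hr (by simp only [constVals, Finset.mem_filter, Finset.mem_univ, true_and]; exact ⟨i, h⟩)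
  let t : Fin n → Finset (Fin m) := fun s => Finset.univ.filter (fun i => f i s ≠ r)
  have hno : ¬ ∃ g : Fin n → Fin m, Function.Injective g ∧ ∀ s, g s ∈ t s := by
    rintro ⟨g, hg, hgt⟩
    choose d hd using hr'
    classical
    let x : Fin m → Fin n := fun i => if h : ∃ s, g s = i then h.choose else d i
    have hx : ∀ s, x (g s) = s := by
      intro s
      have h : ∃ s', g s' = g s := ⟨s, rfl⟩
      have : x (g s) = h.choose := dif_pos h
      rw [this]
      exact hg h.choose_spec
    obtain ⟨i, hi⟩ := hpoly x (fun s => ⟨g s, hx s⟩) r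
    simp only at hi
    by_cases h : ∃ s, g s = i
    · obtain ⟨s, rfl⟩ := h
      rw [hx] at hi
      have := hgt s
      simp [t] at this
      exact this hi
    · have : x i = d i := dif_neg h
      rw [this] at hi
      exact hd i hi
  rw [← Finset.all_card_le_biUnion_card_iff_exists_injective] at hno
  push Not at hno
  obtain ⟨X, hX⟩ := hno
  have hcompl : X.biUnion t = (Iset f X r)ᶜ := by
    ext i
    simp [t, Iset]
  have hle : (Iset f X r).card ≤ m := by simpa using Finset.card_le_univ (Iset f X r)
  rw [hcompl, Finset.card_compl, Fintype.card_fin] at hX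
  have hXn : X.card ≤ n := by simpa using Finset.card_le_univ X
  have hne : X.Nonempty := Finset.card_pos.mp (by omega)
  have hdisj : Iset f X r ∩ constIdx f = ∅ := by
    rw [Finset.eq_empty_iff_forall_notMem]
    intro i hi
    simp only [Iset, constIdx, Finset.mem_inter, Finset.mem_filter, Finset.mem_univ, true_and] at hi
    obtain ⟨h1, k, hk⟩ := hi
    obtain ⟨s, hs⟩ := hne
    obtain ⟨u, hu⟩ := hr' i
    exact hu (by rw [hk u, ← hk s, h1 s hs])
  have hlt : X.card ≠ n := by
    intro h
    have hXu : X = Finset.univ := by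
      rw [← Finset.card_eq_iff_eq_univ]; simpa using h
    have hpos : 0 < (Iset f X r).card := by omega
    obtain ⟨i, hi⟩ := Finset.card_pos.mp hpos
    obtain ⟨u, hu⟩ := hr' i
    simp only [Iset, Finset.mem_filter, Finset.mem_univ, true_and] at hi
    exact hu (hi u (by simp [hXu]))
  have hcI : (constVals f).card ≤ (constIdx f).card := by
    have hz : 0 < n := by omega
    have : constVals f ⊆ (constIdx f).image (fun i => f i ⟨0, hz⟩) := by
      intro j hj
      simp only [constVals, Finset.mem_filter, Finset.mem_univ, true_and] at hj
      obtain ⟨i, hi⟩ := hj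
      simp only [constIdx, Finset.mem_image, Finset.mem_filter, Finset.mem_univ, true_and]
      exact ⟨i, ⟨j, hi⟩, hi _⟩
    exact (Finset.card_le_card this).trans Finset.card_image_le
  have hsum : (Iset f X r).card + (constIdx f).card ≤ m := by
    rw [← Finset.card_union_of_disjoint (Finset.disjoint_iff_inter_eq_empty.mpr hdisj)]
    simpa using Finset.card_le_univ (Iset f X r ∪ constIdx f)
  exact ⟨X, by omega, by omega, hdisj, by omega⟩
end

section
/- In the standing context (m > n ≥ 3, an arity-1 polymorphism f_1,…,f_m : [n] → [n] of Surj_{m,n}, the sets I, C, the number c = |C| with c ≤ n − 1, and the sets I(X,r)): for any family of nonempty subsets X_r ⊆ [n] indexed by r ∈ [n] ∖ C, one has ∑_{r ∈ [n] ∖ C} |I(X_r, r)| · |X_r| ≤ (m − c) · n. -/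
/-- the upper bound `Δ ≤ (m - c)·n`. -/
theorem stmt5 (m n : ℕ) (hn : 3 ≤ n) (hmn : n < m)
    (f : Fin m → Fin n → Fin n)
    (hpoly : ∀ x : Fin m → Fin n, Function.Surjective x →
      Function.Surjective (fun i => f i (x i)))
    (hc : (constVals f).card ≤ n - 1)
    (X : Fin n → Finset (Fin n))
    (hX : ∀ r ∉ constVals f, (X r).Nonempty) :
    ∑ r ∈ (constVals f)ᶜ, (Iset f (X r) r).card * (X r).card
      ≤ (m - (constVals f).card) * n := by
  classical
  have hcard : (constVals f).card ≤ (constIdx f).card := by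
    have h : ∀ j ∈ constVals f, ∃ i, ∀ s, f i s = j := by
      intro j hj
      simpa [constVals] using hj
    haveI : Nonempty (Fin m) := ⟨⟨0, by omega⟩⟩
    choose! g hg using h
    refine Finset.card_le_card_of_injOn g ?_ ?_
    · intro j hj
      have := hg j hj
      simp only [constIdx, Finset.coe_filter, Finset.mem_univ, true_and, Set.mem_setOf_eq]
      exact ⟨j, this⟩
    · intro a ha b hb hab
      have h1 := hg a ha ⟨0, by omega⟩
      have h2 := hg b hb ⟨0, by omega⟩
      rw [hab] at h1
      exact h1.symm.trans h2
  have hswap : ∑ r ∈ (constVals f)ᶜ, (Iset f (X r) r).card * (X r).card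
      = ∑ i : Fin m, ∑ r ∈ (constVals f)ᶜ with (∀ s ∈ X r, f i s = r), (X r).card := by
    simp_rw [Finset.sum_filter]
    rw [Finset.sum_comm]
    refine Finset.sum_congr rfl fun r _ => ?_
    rw [← Finset.sum_filter, Finset.sum_const, smul_eq_mul]
    rfl
  have hle : ∀ i : Fin m,
      ∑ r ∈ (constVals f)ᶜ with (∀ s ∈ X r, f i s = r), (X r).card
        ≤ if i ∈ (constIdx f)ᶜ then n else 0 := by
    intro i
    split_ifs with hi
    · rw [← Finset.card_biUnion]
      · exact (Finset.card_le_univ _).trans (by simp)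
      · intro a ha b hb hab
        refine Finset.disjoint_left.2 ?_
        intro s hsa hsb
        exact hab (((Finset.mem_filter.1 ha).2 s hsa).symm.trans ((Finset.mem_filter.1 hb).2 s hsb))
    · have hi' : ∃ c, ∀ s, f i s = c := by simpa [constIdx] using hi
      obtain ⟨c, hc'⟩ := hi'
      rw [Finset.sum_eq_zero]
      intro r hr
      exfalso
      obtain ⟨hr1, hr2⟩ := Finset.mem_filter.1 hr
      rw [Finset.mem_compl] at hr1
      obtain ⟨s, hs⟩ := hX r hr1
      apply hr1
      have : c = r := (hc' s).symm.trans (hr2 s hs)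
      simp only [constVals, Finset.mem_filter, Finset.mem_univ, true_and]
      exact ⟨i, fun s => (hc' s).trans this⟩
  rw [hswap]
  refine (Finset.sum_le_sum fun i _ => hle i).trans ?_
  rw [← Finset.sum_filter, Finset.sum_const, smul_eq_mul, Finset.filter_univ_mem,
    Finset.card_compl, Fintype.card_fin]
  exact Nat.mul_le_mul_right _ (by omega)
end

section
/- In the standing context (m > n ≥ 3, an arity-1 polymorphism f_1,…,f_m : [n] → [n] of Surj_{m,n}, the sets I, C, the number c = |C| with c ≤ n − 1, and the sets I(X,r)): suppose for each r ∈ [n] ∖ C a subset X_r ⊆ [n] is given with c + 1 ≤ |X_r| ≤ n − 1 and |I(X_r, r)| ≥ m − |X_r| + 1, and let Δ = ∑_{r ∈ [n] ∖ C} |I(X_r, r)| · |X_r|. Then Δ ≥ (n − c) · min((c+1)(m−c), (n−1)(m−n+2)) and Δ ≥ (n − c) · m. Furthermore, if Δ = (n − c) · m then c = 0 and, for every r ∈ [n], |X_r| = 1 and I(X_r, r) = [m]. -/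
theorem aux_term (m n c k t : ℕ) (hmn : n < m) (h1 : c + 1 ≤ k) (h2 : k ≤ n - 1)
    (h3 : m - k + 1 ≤ t) :
    min ((c + 1) * (m - c)) ((n - 1) * (m - n + 2)) ≤ t * k ∧ m ≤ t * k ∧
      (t * k = m → k = 1 ∧ t = m) := by
  obtain ⟨p, rfl⟩ : ∃ p, k = c + 1 + p := ⟨k - (c + 1), by omega⟩
  obtain ⟨q, rfl⟩ : ∃ q, n = c + 1 + p + q + 1 := ⟨n - 1 - (c + 1 + p), by omega⟩
  obtain ⟨w, rfl⟩ : ∃ w, m = c + 1 + p + q + 1 + 1 + w :=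
    ⟨m - (c + 1 + p + q + 1 + 1), by omega⟩
  obtain ⟨z, rfl⟩ : ∃ z, t = q + 3 + w + z := ⟨t - (q + 3 + w), by omega⟩
  have e1 : c + 1 + p + q + 1 + 1 + w - c = p + q + 3 + w := by omega
  have e2 : c + 1 + p + q + 1 - 1 = c + 1 + p + q := by omega
  have e3 : c + 1 + p + q + 1 + 1 + w - (c + 1 + p + q + 1) + 2 = w + 3 := by omega
  rw [e1, e2, e3]
  have hz : (q + 3 + w) * (c + 1 + p) ≤ (q + 3 + w + z) * (c + 1 + p) :=
    Nat.mul_le_mul_right _ (by omega)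
  refine ⟨?_, ?_, ?_⟩
  · rw [min_le_iff]
    rcases le_total (c + 1) (q + 3 + w) with h | h
    · left
      have := Nat.mul_le_mul_left p h
      nlinarith
    · right
      have : q * (w + 3) ≤ q * (c + 1 + p) := Nat.mul_le_mul_left q (by omega)
      nlinarith
  · nlinarith [Nat.zero_le ((q + w + 2) * (c + p))]
  · intro h
    have hcp : c + p = 0 := by
      nlinarith [Nat.zero_le ((q + w) * (c + p)), Nat.zero_le (z * (c + p))]
    have hc : c = 0 := by omega
    have hp : p = 0 := by omega
    subst hc hp
    omega

/-- the lower bounds on `Δ` and the tightness analysis. -/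
theorem stmt6 (m n : ℕ) (hn : 3 ≤ n) (hmn : n < m)
    (f : Fin m → Fin n → Fin n)
    (hpoly : ∀ x : Fin m → Fin n, Function.Surjective x →
      Function.Surjective (fun i => f i (x i)))
    (hc : (constVals f).card ≤ n - 1)
    (X : Fin n → Finset (Fin n))
    (hX : ∀ r ∉ constVals f,
      (constVals f).card + 1 ≤ (X r).card ∧ (X r).card ≤ n - 1 ∧
      m - (X r).card + 1 ≤ (Iset f (X r) r).card) :
    (n - (constVals f).card) *
        min (((constVals f).card + 1) * (m - (constVals f).card))
          ((n - 1) * (m - n + 2))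
      ≤ ∑ r ∈ (constVals f)ᶜ, (Iset f (X r) r).card * (X r).card ∧
    (n - (constVals f).card) * m
      ≤ ∑ r ∈ (constVals f)ᶜ, (Iset f (X r) r).card * (X r).card ∧
    (∑ r ∈ (constVals f)ᶜ, (Iset f (X r) r).card * (X r).card
        = (n - (constVals f).card) * m →
      (constVals f).card = 0 ∧
      ∀ r : Fin n, (X r).card = 1 ∧ Iset f (X r) r = Finset.univ) := by
  have ht := fun r (hr : r ∈ (constVals f)ᶜ) =>
    have h := hX r (Finset.mem_compl.mp hr)
    aux_term m n _ _ _ hmn h.1 h.2.1 h.2.2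
  have hcard : ((constVals f)ᶜ).card = n - (constVals f).card := by
    rw [Finset.card_compl, Fintype.card_fin]
  rw [← hcard, ← smul_eq_mul, ← smul_eq_mul (a := ((constVals f)ᶜ).card) (b := m)]
  refine ⟨Finset.card_nsmul_le_sum _ _ _ fun r hr => (ht r hr).1,
    Finset.card_nsmul_le_sum _ _ _ fun r hr => (ht r hr).2.1, fun h => ?_⟩
  rw [← Finset.sum_const] at h
  have heq := (Finset.sum_eq_sum_iff_of_le fun r hr => (ht r hr).2.1).mp h.symm
  have hall := fun r hr => (ht r hr).2.2 (heq r hr).symm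
  have hne : ((constVals f)ᶜ).Nonempty := by
    rw [← Finset.card_pos]; omega
  obtain ⟨r0, hr0⟩ := hne
  have hc0 : (constVals f).card = 0 := by
    have h1 := (hX r0 (Finset.mem_compl.mp hr0)).1
    have h2 := (hall r0 hr0).1
    omega
  refine ⟨hc0, fun r => ?_⟩
  have hr : r ∈ (constVals f)ᶜ := by
    rw [Finset.card_eq_zero.mp hc0]; simp
  refine ⟨(hall r hr).1, ?_⟩
  rw [← Finset.card_eq_iff_eq_univ, Fintype.card_fin]
  exact (hall r hr).2
end
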